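/- arXiv:1601.00145 — 2 statements merged into one kernel-verified Lean document; each statement's English description precedes it below -/
import Mathlib

section
/- For every packing of n ≥ 2 non-overlapping unit disks in the Euclidean plane, the number of pairs of disks that touch each other is at most ⌊3n − √(12n − 3)⌋. -/
open scoped Classical

noncomputable section

/-- Twice the contact number: the number of ordered pairs of distinct centers in `P`
at distance exactly `2`. -/
def contactsOrdered {d : ℕ} (P : Finset (EuclideanSpace ℝ (Fin d))) : ℕ :=
  (P.offDiag.filter fun p => dist p.1 p.2 = 2).card

namespace Harb

/-! ### Generic finite lemmas -/

/-- an element of `A` minimizing `k`, if any -/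
def amin {α : Type*} (A : Finset α) (k : α → ℝ) : Option α :=
  if h : A.Nonempty then some (A.exists_min_image k h).choose else none

lemma amin_eq_none {α : Type*} {A : Finset α} {k : α → ℝ} : amin A k = none ↔ A = ∅ := by
  unfold amin
  split_ifs with h
  · simp [h.ne_empty]
  · simpa [Finset.not_nonempty_iff_eq_empty] using h

lemma amin_spec {α : Type*} {A : Finset α} {k : α → ℝ} {a : α} (h : amin A k = some a) :
    a ∈ A ∧ ∀ b ∈ A, k a ≤ k b := by
  unfold amin at h
  split_ifs at h with h'
  · have := (A.exists_min_image k h').choose_spec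
    simp only [Option.some.injEq] at h
    rw [h] at this
    exact this

lemma amin_eq {α : Type*} {A : Finset α} {k : α → ℝ} {a : α} (ha : a ∈ A)
    (hlt : ∀ b ∈ A, b ≠ a → k a < k b) : amin A k = some a := by
  cases h : amin A k with
  | none => rw [amin_eq_none] at h; simp [h] at ha
  | some b =>
    obtain ⟨h1, h2⟩ := amin_spec h
    by_contra hne
    have hba : b ≠ a := fun e => hne (by rw [e])
    exact absurd (h2 a ha) (not_le.mpr (hlt b h1 hba))

lemma amin_congr {α : Type*} {A : Finset α} {k k' : α → ℝ}
    (hk : ∀ a ∈ A, ∀ b ∈ A, k a < k b → k' a < k' b)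
    (hinj : ∀ a ∈ A, ∀ b ∈ A, k a = k b → a = b) : amin A k = amin A k' := by
  cases h : amin A k with
  | none => rw [amin_eq_none] at h; rw [eq_comm, amin_eq_none]; exact h
  | some a =>
    obtain ⟨h1, h2⟩ := amin_spec h
    symm
    apply amin_eq h1
    intro b hb hba
    apply hk a h1 b hb
    exact lt_of_le_of_ne (h2 b hb) (fun e => hba (hinj a h1 b hb e).symm)

/-- component of the root in a finite multigraph, with the edge count bound. -/
lemma exists_component {N L : Type*} (Ls : Finset L) (u d : L → N) (r : N) :
    ∃ O : Finset N, r ∈ O ∧ (∀ x ∈ Ls, u x ∈ O ↔ d x ∈ O) ∧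
      O.card ≤ (Ls.filter fun x => u x ∈ O).card + 1 := by
  let good : Finset N → Prop := fun O => r ∈ O ∧
      O.card ≤ (Ls.filter fun x => u x ∈ O ∧ d x ∈ O).card + 1
  have hbd : ∀ O, good O → O.card ≤ Ls.card + 1 := fun O h =>
    h.2.trans (by gcongr; exact Finset.filter_subset _ _)
  have hex : ∃ m, ∃ O, good O ∧ O.card = m := ⟨_, {r}, ⟨by simp, by simp⟩, rfl⟩
  have hb : ∀ m, (∃ O, good O ∧ O.card = m) → m ≤ Ls.card + 1 := by
    rintro m ⟨O, h, rfl⟩; exact hbd O h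
  obtain ⟨O, hO, hOm⟩ := Nat.findGreatest_spec (P := fun m => ∃ O, good O ∧ O.card = m)
    (hb _ hex.choose_spec) hex.choose_spec
  have hmax : ∀ O', good O' → O'.card ≤ O.card := by
    intro O' h
    rw [hOm]
    exact Nat.le_findGreatest (hbd O' h) ⟨O', h, rfl⟩
  have key : ∀ x ∈ Ls, ∀ n, n ∉ O → ((u x ∈ O ∧ d x = n) ∨ (d x ∈ O ∧ u x = n)) → False := by
    intro x hx n hn h
    have : good (insert n O) := by
      refine ⟨Finset.mem_insert_of_mem hO.1, ?_⟩
      rw [Finset.card_insert_of_notMem hn]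
      have hsub : insert x (Ls.filter fun x => u x ∈ O ∧ d x ∈ O) ⊆
          Ls.filter fun x => u x ∈ insert n O ∧ d x ∈ insert n O := by
        intro y hy
        rw [Finset.mem_insert] at hy
        rcases hy with rfl | hy
        · simp only [Finset.mem_filter, Finset.mem_insert]
          rcases h with ⟨h1, h2⟩ | ⟨h1, h2⟩ <;> simp [*]
        · simp only [Finset.mem_filter, Finset.mem_insert] at hy ⊢
          exact ⟨hy.1, Or.inr hy.2.1, Or.inr hy.2.2⟩
      have h3 := Finset.card_le_card hsub
      rw [Finset.card_insert_of_notMem] at h3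
      · have := hO.2; omega
      · simp only [Finset.mem_filter, not_and]
        intro _ h4 h5
        rcases h with ⟨h1, h2⟩ | ⟨h1, h2⟩
        · exact hn (h2 ▸ h5)
        · exact hn (h2 ▸ h4)
    have h4 := hmax _ this
    rw [Finset.card_insert_of_notMem hn] at h4
    omega
  refine ⟨O, hO.1, ?_, hO.2.trans ?_⟩
  · intro x hx
    constructor
    · intro h; by_contra h'; exact key x hx _ h' (Or.inl ⟨h, rfl⟩)
    · intro h; by_contra h'; exact key x hx _ h' (Or.inr ⟨h, rfl⟩)
  · gcongr with x hx
    exact fun h => h.1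

/-- IVT: order is preserved along an interval without coincidences. -/
lemma lt_transport {f g : ℝ → ℝ} (hf : Continuous f) (hg : Continuous g) {s t : ℝ}
    (h : f s < g s) (hne : ∀ r ∈ Set.uIcc s t, f r ≠ g r) : f t < g t := by
  by_contra hlt
  push Not at hlt
  have hc : ContinuousOn (fun r => g r - f r) (Set.uIcc s t) := (hg.sub hf).continuousOn
  have := intermediate_value_uIcc hc
  have h0 : (0:ℝ) ∈ Set.uIcc (g s - f s) (g t - f t) := by
    rw [Set.mem_uIcc]; right; constructor <;> linarith
  obtain ⟨r, hr, hr'⟩ := this h0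
  exact hne r hr (by simp only at hr'; linarith)

/-- cyclic successor -/
lemma exists_next {α : Type*} (D : Finset α) {β : Type*} (v : α → β) (k : α → ℝ)
    (hinj : ∀ a ∈ D, ∀ b ∈ D, v a = v b → k a = k b → a = b) :
    ∃ nxt : α → α, (∀ a ∈ D, nxt a ∈ D) ∧ (∀ a ∈ D, v (nxt a) = v a) ∧
      (∀ a ∈ D, ∀ b ∈ D, nxt a = nxt b → a = b) ∧
      (∀ a ∈ D, (k a < k (nxt a) ∧ ∀ b ∈ D, v b = v a → ¬ (k a < k b ∧ k b < k (nxt a))) ∨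
        ((∀ b ∈ D, v b = v a → k b ≤ k a) ∧ ∀ b ∈ D, v b = v a → k (nxt a) ≤ k b)) := by
  have ex : ∀ a : α, ∃ c : α, a ∈ D → (c ∈ D ∧ v c = v a ∧
     ((k a < k c ∧ ∀ b ∈ D, v b = v a → ¬ (k a < k b ∧ k b < k c)) ∨
        ((∀ b ∈ D, v b = v a → k b ≤ k a) ∧ ∀ b ∈ D, v b = v a → k c ≤ k b))) := by
    intro a
    by_cases ha : a ∈ D
    · by_cases hG : (D.filter fun b => v b = v a ∧ k a < k b).Nonempty
      · obtain ⟨c, hc, hc'⟩ := Finset.exists_min_image _ k hG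
        simp only [Finset.mem_filter] at hc hc'
        refine ⟨c, fun _ => ⟨hc.1, hc.2.1, Or.inl ⟨hc.2.2, ?_⟩⟩⟩
        intro b hb hv h
        exact absurd (hc' b ⟨hb, hv, h.1⟩) (not_le.mpr h.2)
      · have hne : (D.filter fun b => v b = v a).Nonempty := ⟨a, by simp [ha]⟩
        obtain ⟨c, hc, hc'⟩ := Finset.exists_min_image _ k hne
        simp only [Finset.mem_filter] at hc hc'
        refine ⟨c, fun _ => ⟨hc.1, hc.2, Or.inr ⟨?_, fun b hb hv => hc' b ⟨hb, hv⟩⟩⟩⟩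
        intro b hb hv
        by_contra hlt
        push Not at hlt
        exact hG ⟨b, by simp [hb, hv, hlt]⟩
    · exact ⟨a, fun h => absurd h ha⟩
  choose nxt hn using ex
  refine ⟨nxt, fun a ha => (hn a ha).1, fun a ha => (hn a ha).2.1, ?_, fun a ha => (hn a ha).2.2⟩
  intro a ha b hb hab
  obtain ⟨a1, a2, a3⟩ := hn a ha
  obtain ⟨b1, b2, b3⟩ := hn b hb
  have hv : v a = v b := by rw [← a2, hab, b2]
  rw [hab] at a3 
  apply hinj a ha b hb hv
  rcases a3 with ⟨a3, a4⟩ | ⟨a3, a4⟩ <;> rcases b3 with ⟨b3, b4⟩ | ⟨b3, b4⟩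
  · have h1 := a4 b hb hv.symm
    have h2 := b4 a ha hv
    by_contra hne
    rcases lt_or_gt_of_ne hne with h | h
    · exact h1 ⟨h, b3⟩
    · exact h2 ⟨h, a3⟩
  · exact absurd (b4 a ha hv) (not_le.mpr a3)
  · exact absurd (a4 b hb hv.symm) (not_le.mpr b3)
  · exact le_antisymm (b3 a ha hv) (a3 b hb hv.symm)

/-! ### Geometry of contact edges -/

/-- darts (ordered contacts) -/
def D (P : Finset ℂ) : Finset (ℂ × ℂ) := (P ×ˢ P).filter fun p => dist p.1 p.2 = 2

/-- upward darts, i.e. edges -/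
def E (P : Finset ℂ) : Finset (ℂ × ℂ) := (D P).filter fun p => p.1.im < p.2.im

/-- packing with pairwise distinct heights -/
structure Cfg (P : Finset ℂ) : Prop where
  pack : ∀ x ∈ P, ∀ y ∈ P, x ≠ y → 2 ≤ dist x y
  inj : ∀ x ∈ P, ∀ y ∈ P, x.im = y.im → x = y

def sl (e : ℂ × ℂ) : ℝ := (e.2.re - e.1.re) / (e.2.im - e.1.im)

def pos (e : ℂ × ℂ) (t : ℝ) : ℝ := e.1.re + (t - e.1.im) * sl e

def act (e : ℂ × ℂ) (t : ℝ) : Prop := e.1.im < t ∧ t < e.2.im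

lemma dist_sq (x y : ℂ) : dist x y ^ 2 = (x.re - y.re) ^ 2 + (x.im - y.im) ^ 2 := by
  rw [Complex.dist_eq_re_im, Real.sq_sqrt (by positivity)]

lemma mem_D {P : Finset ℂ} {a : ℂ × ℂ} :
    a ∈ D P ↔ a.1 ∈ P ∧ a.2 ∈ P ∧ dist a.1 a.2 = 2 := by
  simp [D, and_assoc]

lemma mem_E {P : Finset ℂ} {a : ℂ × ℂ} :
    a ∈ E P ↔ a.1 ∈ P ∧ a.2 ∈ P ∧ dist a.1 a.2 = 2 ∧ a.1.im < a.2.im := by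
  simp [E, mem_D, and_assoc]

lemma continuous_pos (e : ℂ × ℂ) : Continuous (pos e) := by
  unfold pos; fun_prop

lemma pos_fst (e : ℂ × ℂ) (t : ℝ) : pos e t = e.1.re + (t - e.1.im) * sl e := rfl

lemma pos_snd {P : Finset ℂ} {e : ℂ × ℂ} (he : e ∈ E P) (t : ℝ) :
    pos e t = e.2.re + (t - e.2.im) * sl e := by
  have h := (mem_E.1 he).2.2.2
  have h' : e.2.im - e.1.im ≠ 0 := by linarith
  unfold pos sl
  field_simp
  ring

/-- parametrization of a point on an edge -/
lemma param {P : Finset ℂ} {e : ℂ × ℂ} (he : e ∈ E P) {t : ℝ} (h1 : e.1.im ≤ t)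
    (h2 : t ≤ e.2.im) : ∃ s : ℝ, 0 ≤ s ∧ s ≤ 1 ∧ t = e.1.im + s * (e.2.im - e.1.im) ∧
      pos e t = e.1.re + s * (e.2.re - e.1.re) := by
  have h := (mem_E.1 he).2.2.2
  have h' : 0 < e.2.im - e.1.im := by linarith
  refine ⟨(t - e.1.im) / (e.2.im - e.1.im), by apply div_nonneg <;> linarith, ?_, ?_, ?_⟩
  · rw [div_le_one h']; linarith
  · field_simp; ring
  · unfold pos sl; field_simp

lemma far {P : Finset ℂ} (hP : Cfg P) {e : ℂ × ℂ} (he : e ∈ E P) {w : ℂ} (hw : w ∈ P)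
    (hw1 : w ≠ e.1) (hw2 : w ≠ e.2) {t : ℝ} (h1 : e.1.im ≤ t) (h2 : t ≤ e.2.im) :
    3 ≤ (w.re - pos e t) ^ 2 + (w.im - t) ^ 2 := by
  obtain ⟨s, hs0, hs1, ht, hp⟩ := param he h1 h2
  obtain ⟨m1, m2, m3, m4⟩ := mem_E.1 he
  have a1 := hP.pack w hw e.1 m1 hw1
  have a2 := hP.pack w hw e.2 m2 hw2
  have b1 : 4 ≤ (w.re - e.1.re) ^ 2 + (w.im - e.1.im) ^ 2 := by
    rw [← dist_sq]; nlinarith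
  have b2 : 4 ≤ (w.re - e.2.re) ^ 2 + (w.im - e.2.im) ^ 2 := by
    rw [← dist_sq]; nlinarith
  have b3 : (e.1.re - e.2.re) ^ 2 + (e.1.im - e.2.im) ^ 2 = 4 := by
    rw [← dist_sq, m3]; norm_num
  rw [hp, ht]
  have key : (w.re - (e.1.re + s * (e.2.re - e.1.re))) ^ 2 +
      (w.im - (e.1.im + s * (e.2.im - e.1.im))) ^ 2 =
      (1 - s) * ((w.re - e.1.re) ^ 2 + (w.im - e.1.im) ^ 2) +
      s * ((w.re - e.2.re) ^ 2 + (w.im - e.2.im) ^ 2) -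
      s * (1 - s) * ((e.1.re - e.2.re) ^ 2 + (e.1.im - e.2.im) ^ 2) := by ring
  rw [key, b3]
  nlinarith [mul_le_mul_of_nonneg_left b1 (sub_nonneg.2 hs1), mul_le_mul_of_nonneg_left b2 hs0,
    sq_nonneg (2 * s - 1)]

lemma cross {P : Finset ℂ} (hP : Cfg P) {e f : ℂ × ℂ} (he : e ∈ E P) (hf : f ∈ E P) {t : ℝ}
    (e1 : e.1.im ≤ t) (e2 : t ≤ e.2.im) (f1 : f.1.im ≤ t) (f2 : t ≤ f.2.im)
    (h : pos e t = pos f t) :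
    e = f ∨ ∃ x, (x = e.1 ∨ x = e.2) ∧ (x = f.1 ∨ x = f.2) ∧ x.im = t := by
  obtain ⟨s, hs0, hs1, ht, hp⟩ := param he e1 e2
  obtain ⟨r, hr0, hr1, ht', hp'⟩ := param hf f1 f2
  obtain ⟨m1, m2, m3, m4⟩ := mem_E.1 he
  obtain ⟨n1, n2, n3, n4⟩ := mem_E.1 hf
  have b3 : (e.1.re - e.2.re) ^ 2 + (e.1.im - e.2.im) ^ 2 = 4 := by
    rw [← dist_sq, m3]; norm_num
  have b4 : (f.1.re - f.2.re) ^ 2 + (f.1.im - f.2.im) ^ 2 = 4 := by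
    rw [← dist_sq, n3]; norm_num
  rcases le_total r (1/2) with hr | hr
  · have hmem : f.1 = e.1 ∨ f.1 = e.2 := by
      by_contra hc
      push Not at hc
      have := far hP he n1 hc.1 hc.2 e1 e2
      rw [h, hp', ht'] at this
      have k : (f.1.re - (f.1.re + r * (f.2.re - f.1.re))) ^ 2 +
        (f.1.im - (f.1.im + r * (f.2.im - f.1.im))) ^ 2 =
        r ^ 2 * ((f.1.re - f.2.re) ^ 2 + (f.1.im - f.2.im) ^ 2) := by ring
      rw [k, b4] at this
      nlinarith
    rcases hmem with h1 | h1
    · have i1 : s * (e.2.re - e.1.re) = r * (f.2.re - f.1.re) := by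
        have : f.1.re = e.1.re := by rw [h1]
        linarith
      have i2 : s * (e.2.im - e.1.im) = r * (f.2.im - f.1.im) := by
        have : f.1.im = e.1.im := by rw [h1]
        linarith
      have hsr : s = r := by
        have k : s ^ 2 * ((e.1.re - e.2.re) ^ 2 + (e.1.im - e.2.im) ^ 2) =
          r ^ 2 * ((f.1.re - f.2.re) ^ 2 + (f.1.im - f.2.im) ^ 2) := by
          linear_combination (s * (e.2.re - e.1.re) + r * (f.2.re - f.1.re)) * i1 +
            (s * (e.2.im - e.1.im) + r * (f.2.im - f.1.im)) * i2
        rw [b3, b4] at k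
        have : s ^ 2 = r ^ 2 := by linarith
        exact (pow_left_inj₀ hs0 hr0 two_ne_zero).1 this
      by_cases hs : s = 0
      · right
        exact ⟨e.1, Or.inl rfl, Or.inl h1.symm, by rw [ht, hs]; ring⟩
      · left
        subst hsr
        have j1 := mul_left_cancel₀ hs i1
        have j2 := mul_left_cancel₀ hs i2
        rw [h1] at j1 j2
        exact Prod.ext h1.symm (Complex.ext (by linarith) (by linarith))
    · right
      exact ⟨e.2, Or.inr rfl, Or.inl h1.symm, le_antisymm (h1 ▸ f1) e2⟩
  · have hmem : f.2 = e.1 ∨ f.2 = e.2 := by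
      by_contra hc
      push Not at hc
      have := far hP he n2 hc.1 hc.2 e1 e2
      rw [h, hp', ht'] at this
      have k : (f.2.re - (f.1.re + r * (f.2.re - f.1.re))) ^ 2 +
        (f.2.im - (f.1.im + r * (f.2.im - f.1.im))) ^ 2 =
        (1 - r) ^ 2 * ((f.1.re - f.2.re) ^ 2 + (f.1.im - f.2.im) ^ 2) := by ring
      rw [k, b4] at this
      nlinarith
    rcases hmem with h1 | h1
    · right
      exact ⟨e.1, Or.inl rfl, Or.inr h1.symm, le_antisymm e1 (h1 ▸ f2)⟩
    · have i1 : (1 - s) * (e.2.re - e.1.re) = (1 - r) * (f.2.re - f.1.re) := by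
        have : f.2.re = e.2.re := by rw [h1]
        linarith
      have i2 : (1 - s) * (e.2.im - e.1.im) = (1 - r) * (f.2.im - f.1.im) := by
        have : f.2.im = e.2.im := by rw [h1]
        linarith
      have hsr : 1 - s = 1 - r := by
        have k : (1 - s) ^ 2 * ((e.1.re - e.2.re) ^ 2 + (e.1.im - e.2.im) ^ 2) =
          (1 - r) ^ 2 * ((f.1.re - f.2.re) ^ 2 + (f.1.im - f.2.im) ^ 2) := by
          linear_combination ((1 - s) * (e.2.re - e.1.re) + (1 - r) * (f.2.re - f.1.re)) * i1 +
            ((1 - s) * (e.2.im - e.1.im) + (1 - r) * (f.2.im - f.1.im)) * i2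
        rw [b3, b4] at k
        have : (1 - s) ^ 2 = (1 - r) ^ 2 := by linarith
        exact (pow_left_inj₀ (by linarith) (by linarith) two_ne_zero).1 this
      by_cases hs : 1 - s = 0
      · right
        refine ⟨e.2, Or.inr rfl, Or.inr h1.symm, ?_⟩
        have : s = 1 := by linarith
        rw [ht, this]; ring
      · left
        rw [← hsr] at i1 i2
        have j1 := mul_left_cancel₀ hs i1
        have j2 := mul_left_cancel₀ hs i2
        rw [h1] at j1 j2
        exact Prod.ext (Complex.ext (by linarith) (by linarith)) h1.symm

lemma pos_inj {P : Finset ℂ} (hP : Cfg P) {e f : ℂ × ℂ} (he : e ∈ E P) (hf : f ∈ E P) {t : ℝ}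
    (ha : act e t) (hb : act f t) (h : pos e t = pos f t) : e = f := by
  rcases cross hP he hf ha.1.le ha.2.le hb.1.le hb.2.le h with h | ⟨x, h1, h2, h3⟩
  · exact h
  · rcases h1 with rfl | rfl
    · exact absurd h3 ha.1.ne
    · exact absurd h3 ha.2.ne'

/-- first edge strictly to the right of `(s,t)` -/
def nb (P : Finset ℂ) (s t : ℝ) : Option (ℂ × ℂ) :=
  amin ((E P).filter fun f => act f t ∧ s < pos f t) (fun f => pos f t)

def Inc (P : Finset ℂ) (x : ℂ) (σ : ℝ) : Finset (ℂ × ℂ) :=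
  (E P).filter fun e => if 0 < σ then e.1 = x else e.2 = x

def key (σ : ℝ) (e : ℂ × ℂ) : ℝ := if 0 < σ then sl e else - sl e

def side (P : Finset ℂ) (x : ℂ) (σ : ℝ) : Option (ℂ × ℂ) :=
  if (Inc P x σ).Nonempty then amin (Inc P x σ) (key σ) else nb P x.re x.im

def Near (P : Finset ℂ) (x : ℂ) (t : ℝ) : Prop :=
  t ≠ x.im ∧ ∀ y ∈ P, y.im ∈ Set.uIcc x.im t → y = x

section near
variable {P : Finset ℂ} {x : ℂ} {t : ℝ}

lemma Inc_E {σ : ℝ} {f : ℂ × ℂ} (hf : f ∈ Inc P x σ) : f ∈ E P := (Finset.mem_filter.1 hf).1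

lemma Inc_pos {σ : ℝ} {f : ℂ × ℂ} (hf : f ∈ Inc P x σ) (r : ℝ) :
    pos f r = x.re + (r - x.im) * sl f := by
  have h := (Finset.mem_filter.1 hf)
  split_ifs at h with h'
  · rw [pos_fst, h.2]
  · rw [pos_snd h.1, h.2]

lemma near_act_of_pass (hn : Near P x t) {f : ℂ × ℂ} (hf : f ∈ E P) (h : act f x.im) : act f t := by
  obtain ⟨m1, m2, m3, m4⟩ := mem_E.1 hf
  obtain ⟨h1, h2⟩ := h
  constructor
  · by_contra hc
    push Not at hc
    have := hn.2 _ m1 (by rw [Set.mem_uIcc]; right; constructor <;> linarith)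
    rw [this] at h1; exact lt_irrefl _ h1
  · by_contra hc
    push Not at hc
    have := hn.2 _ m2 (by rw [Set.mem_uIcc]; left; constructor <;> linarith)
    rw [this] at h2; exact lt_irrefl _ h2

lemma near_pass_or_inc (hn : Near P x t) {f : ℂ × ℂ} (hf : f ∈ E P) (h : act f t) :
    act f x.im ∨ f ∈ Inc P x (t - x.im) := by
  obtain ⟨m1, m2, m3, m4⟩ := mem_E.1 hf
  obtain ⟨h1, h2⟩ := h
  rcases lt_or_gt_of_ne hn.1 with ht | ht
  · rcases lt_or_ge x.im f.2.im with h3 | h3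
    · left; constructor <;> linarith
    · right
      have := hn.2 _ m2 (by rw [Set.mem_uIcc]; right; constructor <;> linarith)
      simp only [Inc, Finset.mem_filter]
      refine ⟨hf, ?_⟩
      rw [if_neg (by linarith)]; exact this
  · rcases lt_or_ge f.1.im x.im with h3 | h3
    · left; constructor <;> linarith
    · right
      have := hn.2 _ m1 (by rw [Set.mem_uIcc]; left; constructor <;> linarith)
      simp only [Inc, Finset.mem_filter]
      refine ⟨hf, ?_⟩
      rw [if_pos (by linarith)]; exact this

lemma near_inc_act (hn : Near P x t) {f : ℂ × ℂ} (hf : f ∈ Inc P x (t - x.im)) : act f t := by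
  have h := (Finset.mem_filter.1 hf)
  obtain ⟨m1, m2, m3, m4⟩ := mem_E.1 h.1
  rcases lt_or_gt_of_ne hn.1 with ht | ht
  · rw [if_neg (by linarith)] at h
    rw [h.2] at m4
    refine ⟨?_, by rw [h.2]; exact ht⟩
    by_contra hc
    push Not at hc
    have := hn.2 _ m1 (by rw [Set.mem_uIcc]; right; constructor <;> linarith)
    rw [this] at m4; exact lt_irrefl _ m4
  · rw [if_pos (by linarith)] at h
    rw [h.2] at m4
    refine ⟨by rw [h.2]; exact ht, ?_⟩
    by_contra hc
    push Not at hc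
    have := hn.2 _ m2 (by rw [Set.mem_uIcc]; left; constructor <;> linarith)
    rw [this] at m4; exact lt_irrefl _ m4

lemma inc_not_pass {σ : ℝ} {f : ℂ × ℂ} (hf : f ∈ Inc P x σ) : ¬ act f x.im := by
  have h := (Finset.mem_filter.1 hf)
  split_ifs at h with h'
  · rw [← h.2]; exact fun h => lt_irrefl _ h.1
  · rw [← h.2]; exact fun h => lt_irrefl _ h.2

lemma near_weak (hn : Near P x t) {f : ℂ × ℂ} (hf : f ∈ E P) (h : act f t) {r : ℝ} (hr : r ∈ Set.uIcc x.im t) :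
    f.1.im ≤ r ∧ r ≤ f.2.im := by
  have hx : f.1.im ≤ x.im ∧ x.im ≤ f.2.im := by
    rcases near_pass_or_inc hn hf h with h1 | h1
    · exact ⟨h1.1.le, h1.2.le⟩
    · have h2 := (Finset.mem_filter.1 h1).2
      have m4 := (mem_E.1 hf).2.2.2
      split_ifs at h2 with h'
      · rw [← h2]; exact ⟨le_rfl, m4.le⟩
      · rw [← h2]; exact ⟨m4.le, le_rfl⟩
  rw [Set.mem_uIcc] at hr
  obtain ⟨h1, h2⟩ := h
  rcases hr with hr | hr <;> constructor <;> linarith [hx.1, hx.2, hr.1, hr.2]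

lemma near_order (hP : Cfg P) (hn : Near P x t) {f g : ℂ × ℂ} (hf : f ∈ E P) (hg : g ∈ E P) (h1 : act f t) (h2 : act g t)
    (h : pos f x.im < pos g x.im) : pos f t < pos g t := by
  apply lt_transport (continuous_pos f) (continuous_pos g) h
  intro r hr he
  have w1 := near_weak hn hf h1 hr
  have w2 := near_weak hn hg h2 hr
  rcases cross hP hf hg w1.1 w1.2 w2.1 w2.2 he with h3 | ⟨y, h3, h4, h5⟩
  · rw [h3] at h; exact lt_irrefl _ h
  · have hy : y ∈ P := by
      rcases h3 with rfl | rfl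
      · exact (mem_E.1 hf).1
      · exact (mem_E.1 hf).2.1
    have := hn.2 y hy (h5 ▸ hr)
    rw [← h5, this] at he
    exact absurd he h.ne

lemma inc_key (hn : Near P x t) {f g : ℂ × ℂ} (hf : f ∈ Inc P x (t - x.im)) (hg : g ∈ Inc P x (t - x.im)) :
    pos f t < pos g t ↔ key (t - x.im) f < key (t - x.im) g := by
  rw [Inc_pos hf, Inc_pos hg]
  unfold key
  rcases lt_or_gt_of_ne hn.1 with ht | ht
  · rw [if_neg (by linarith), if_neg (by linarith)]
    constructor <;> intro h <;> nlinarith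
  · rw [if_pos (by linarith), if_pos (by linarith)]
    constructor <;> intro h <;> nlinarith

lemma key_eq {σ : ℝ} {f g : ℂ × ℂ} (h : key σ f = key σ g) : sl f = sl g := by
  unfold key at h
  split_ifs at h
  · exact h
  · linarith

lemma inc_inj (hP : Cfg P) (hn : Near P x t) {f g : ℂ × ℂ} (hf : f ∈ Inc P x (t - x.im)) (hg : g ∈ Inc P x (t - x.im))
    (h : key (t - x.im) f = key (t - x.im) g) : f = g := by
  apply pos_inj hP (Inc_E hf) (Inc_E hg) (near_inc_act hn hf) (near_inc_act hn hg)
  rw [Inc_pos hf, Inc_pos hg, key_eq h]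

lemma Inc_sign {σ τ : ℝ} (h : 0 < σ ↔ 0 < τ) : Inc P x σ = Inc P x τ := by
  unfold Inc; simp only [h]

lemma key_sign {σ τ : ℝ} (h : 0 < σ ↔ 0 < τ) : key σ = key τ := by
  funext e; unfold key; simp only [h]

lemma side_sign {σ τ : ℝ} (h : 0 < σ ↔ 0 < τ) : side P x σ = side P x τ := by
  unfold side; rw [Inc_sign h, key_sign h]

lemma nb_near (hP : Cfg P) (hn : Near P x t) {s : ℝ} {J : Finset (ℂ × ℂ)} (hJ : J ⊆ Inc P x (t - x.im))
    (hA : ∀ f ∈ E P, (act f t ∧ s < pos f t) ↔ (f ∈ J ∨ (act f x.im ∧ x.re < pos f x.im))) :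
    nb P s t = if J.Nonempty then amin J (key (t - x.im)) else nb P x.re x.im := by
  split_ifs with hne
  · cases hc : amin J (key (t - x.im)) with
    | none => rw [amin_eq_none] at hc; exact absurd hc hne.ne_empty
    | some c =>
      obtain ⟨c1, c2⟩ := amin_spec hc
      have cE := Inc_E (hJ c1)
      apply amin_eq
      · simp only [Finset.mem_filter]
        exact ⟨cE, (hA c cE).2 (Or.inl c1)⟩
      · intro b hb hbc
        simp only [Finset.mem_filter] at hb
        rcases (hA b hb.1).1 hb.2 with h | h
        · rw [inc_key hn (hJ c1) (hJ h)]
          apply lt_of_le_of_ne (c2 b h)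
          intro e
          exact hbc (inc_inj hP hn (hJ c1) (hJ h) e).symm
        · apply near_order hP hn cE hb.1 (near_inc_act hn (hJ c1)) hb.2.1
          rw [Inc_pos (hJ c1)]
          simpa using h.2
  · rw [Finset.not_nonempty_iff_eq_empty] at hne
    subst hne
    unfold nb
    have : ((E P).filter fun f => act f t ∧ s < pos f t) =
      ((E P).filter fun f => act f x.im ∧ x.re < pos f x.im) := by
      apply Finset.filter_congr
      intro f hf
      rw [hA f hf]; simp
    rw [this]
    symm
    apply amin_congr
    · intro a ha b hb h
      simp only [Finset.mem_filter] at ha hb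
      exact near_order hP hn ha.1 hb.1 (near_act_of_pass hn ha.1 ha.2.1)
        (near_act_of_pass hn hb.1 hb.2.1) h
    · intro a ha b hb h
      simp only [Finset.mem_filter] at ha hb
      exact pos_inj hP ha.1 hb.1 ha.2.1 hb.2.1 h

end near

/-! ### Tracks -/

structure Track (P : Finset ℂ) (g : ℝ → ℝ) (a b : ℝ) : Prop where
  cont : Continuous g
  edge : ∀ f ∈ E P, (∀ r ∈ Set.uIcc a b, pos f r = g r) ∨
    ∀ r ∈ Set.uIcc a b, f.1.im ≤ r → r ≤ f.2.im → pos f r ≠ g r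
  vert : ∀ x ∈ P, x.im ∈ Set.uIcc a b → g x.im ≠ x.re

lemma Track.mono {P : Finset ℂ} {g : ℝ → ℝ} {a b c d : ℝ} (h : Track P g a b)
    (hs : Set.uIcc c d ⊆ Set.uIcc a b) : Track P g c d where
  cont := h.cont
  edge := fun f hf => (h.edge f hf).imp (fun h r hr => h r (hs hr)) (fun h r hr => h r (hs hr))
  vert := fun x hx h' => h.vert x hx (hs h')

lemma pass_ne {P : Finset ℂ} (hP : Cfg P) {x : ℂ} (hx : x ∈ P) {f : ℂ × ℂ} (hf : f ∈ E P)
    (h : act f x.im) : pos f x.im ≠ x.re := by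
  intro he
  have := far hP hf hx (by rintro rfl; exact lt_irrefl _ h.1) (by rintro rfl; exact lt_irrefl _ h.2)
    h.1.le h.2.le
  rw [he] at this
  norm_num at this

lemma near_track {P : Finset ℂ} (hP : Cfg P) {x : ℂ} (hx : x ∈ P) {t : ℝ} (hn : Near P x t)
    {g : ℝ → ℝ} (hg : Track P g x.im t) :
    nb P (g t) t = if g x.im < x.re ∧
      (∀ f ∈ E P, act f x.im → g x.im < pos f x.im → x.re < pos f x.im)
      then side P x (t - x.im) else nb P (g x.im) x.im := by
  have tr : ∀ f ∈ E P, act f t → (g t < pos f t ↔ g x.im < pos f x.im) := by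
    intro f hf h
    rcases hg.edge f hf with h1 | h1
    · rw [h1 _ Set.left_mem_uIcc, h1 _ Set.right_mem_uIcc]; simp
    · constructor
      · intro h2
        apply lt_transport hg.cont (continuous_pos f) h2
        intro r hr
        rw [Set.uIcc_comm] at hr
        have := near_weak hn hf h hr
        exact (h1 r hr this.1 this.2).symm
      · intro h2
        apply lt_transport hg.cont (continuous_pos f) h2
        intro r hr
        have := near_weak hn hf h hr
        exact (h1 r hr this.1 this.2).symm
  have hgx := hg.vert x hx Set.left_mem_uIcc
  split_ifs with hc
  · rw [nb_near hP hn (s := g t) (Finset.Subset.refl _)]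
    · rfl
    · intro f hf
      constructor
      · rintro ⟨h1, h2⟩
        rw [tr f hf h1] at h2
        rcases near_pass_or_inc hn hf h1 with h3 | h3
        · exact Or.inr ⟨h3, hc.2 f hf h3 h2⟩
        · exact Or.inl h3
      · rintro (h | h)
        · have h1 := near_inc_act hn h
          refine ⟨h1, (tr f hf h1).2 ?_⟩
          rw [Inc_pos h]; simpa using hc.1
        · have h1 := near_act_of_pass hn hf h.1
          exact ⟨h1, (tr f hf h1).2 (hc.1.trans h.2)⟩
  · rcases lt_or_gt_of_ne hgx with hlt | hlt
    · -- some passing edge in between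
      cases hc0 : nb P (g x.im) x.im with
      | none =>
        exfalso
        apply hc
        refine ⟨hlt, ?_⟩
        intro f hf h1 h2
        unfold nb at hc0
        rw [amin_eq_none] at hc0
        have hm : f ∈ (E P).filter (fun f => act f x.im ∧ g x.im < pos f x.im) :=
          Finset.mem_filter.2 ⟨hf, h1, h2⟩
        rw [hc0] at hm; simp at hm
      | some c =>
        obtain ⟨c1, c2⟩ := amin_spec hc0
        simp only [Finset.mem_filter] at c1 c2
        have hcx : pos c x.im < x.re := by
          by_contra hcx
          push Not at hcx
          apply hc
          refine ⟨hlt, fun f hf h1 h2 => ?_⟩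
          have h3 := c2 f ⟨hf, h1, h2⟩
          exact lt_of_le_of_ne (hcx.trans h3) (pass_ne hP hx hf h1).symm
        have ct := near_act_of_pass hn c1.1 c1.2.1
        apply amin_eq
        · simp only [Finset.mem_filter]
          exact ⟨c1.1, ct, (tr c c1.1 ct).2 c1.2.2⟩
        · intro b hb hbc
          simp only [Finset.mem_filter] at hb
          apply near_order hP hn c1.1 hb.1 ct hb.2.1
          rcases near_pass_or_inc hn hb.1 hb.2.1 with h3 | h3
          · apply lt_of_le_of_ne (c2 b ⟨hb.1, h3, (tr b hb.1 hb.2.1).1 hb.2.2⟩)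
            intro he
            exact hbc (pos_inj hP c1.1 hb.1 c1.2.1 h3 he).symm
          · rw [Inc_pos h3 x.im]; simpa using hcx
    · have : ((E P).filter fun f => act f t ∧ g t < pos f t) =
        ((E P).filter fun f => act f x.im ∧ g x.im < pos f x.im) := by
        apply Finset.filter_congr
        intro f hf
        constructor
        · rintro ⟨h1, h2⟩
          rw [tr f hf h1] at h2
          rcases near_pass_or_inc hn hf h1 with h3 | h3
          · exact ⟨h3, h2⟩
          · rw [Inc_pos h3] at h2; simp at h2; linarith
        · rintro ⟨h1, h2⟩
          have h3 := near_act_of_pass hn hf h1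
          exact ⟨h3, (tr f hf h3).2 h2⟩
      unfold nb
      rw [this]
      symm
      apply amin_congr
      · intro a ha b hb h
        simp only [Finset.mem_filter] at ha hb
        exact near_order hP hn ha.1 hb.1 (near_act_of_pass hn ha.1 ha.2.1)
          (near_act_of_pass hn hb.1 hb.2.1) h
      · intro a ha b hb h
        simp only [Finset.mem_filter] at ha hb
        exact pos_inj hP ha.1 hb.1 ha.2.1 hb.2.1 h

lemma nb_const {P : Finset ℂ} (hP : Cfg P) {t1 t2 : ℝ} (hlt : t1 ≤ t2)
    (hno : ∀ x ∈ P, x.im ∉ Set.Icc t1 t2) {g : ℝ → ℝ} (hg : Track P g t1 t2) :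
    nb P (g t1) t1 = nb P (g t2) t2 := by
  have ac : ∀ f ∈ E P, ∀ r ∈ Set.uIcc t1 t2, ∀ r' ∈ Set.uIcc t1 t2, act f r → act f r' := by
    intro f hf r hr r' hr' h
    obtain ⟨m1, m2, m3, m4⟩ := mem_E.1 hf
    rw [Set.uIcc_of_le hlt] at hr hr'
    constructor
    · by_contra hc; push Not at hc
      exact hno _ m1 ⟨hr'.1.trans hc, h.1.le.trans hr.2⟩
    · by_contra hc; push Not at hc
      exact hno _ m2 ⟨hr.1.trans h.2.le, hc.trans hr'.2⟩
  have l := Set.left_mem_uIcc (a := t1) (b := t2)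
  have r := Set.right_mem_uIcc (a := t1) (b := t2)
  have : ((E P).filter fun f => act f t1 ∧ g t1 < pos f t1) =
        ((E P).filter fun f => act f t2 ∧ g t2 < pos f t2) := by
    apply Finset.filter_congr
    intro f hf
    rcases hg.edge f hf with h1 | h1
    · rw [h1 _ l, h1 _ r]; simp
    · constructor
      · rintro ⟨h2, h3⟩
        refine ⟨ac f hf _ l _ r h2, lt_transport hg.cont (continuous_pos f) h3 ?_⟩
        intro s hs
        have := ac f hf _ l _ hs h2
        exact (h1 s hs this.1.le this.2.le).symm
      · rintro ⟨h2, h3⟩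
        refine ⟨ac f hf _ r _ l h2, lt_transport hg.cont (continuous_pos f) h3 ?_⟩
        intro s hs
        rw [Set.uIcc_comm] at hs
        have := ac f hf _ r _ hs h2
        exact (h1 s hs this.1.le this.2.le).symm
  unfold nb
  rw [this]
  apply amin_congr
  · intro a ha b hb h
    simp only [Finset.mem_filter] at ha hb
    apply lt_transport (continuous_pos a) (continuous_pos b) h
    intro s hs he
    have := pos_inj hP ha.1 hb.1 (ac a ha.1 _ r _ hs ha.2.1) (ac b hb.1 _ r _ hs hb.2.1) he
    rw [this] at h; exact lt_irrefl _ h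
  · intro a ha b hb h
    simp only [Finset.mem_filter] at ha hb
    exact pos_inj hP ha.1 hb.1 (ac a ha.1 _ r _ l ha.2.1) (ac b hb.1 _ r _ l hb.2.1) h

def Gen (P : Finset ℂ) (t : ℝ) : Prop := ∀ x ∈ P, x.im ≠ t

lemma exists_gen (P : Finset ℂ) {a b : ℝ} (h : a < b) : ∃ t, a < t ∧ t < b ∧ Gen P t := by
  obtain ⟨t, ht, ht'⟩ := (Set.Ioo_infinite h).exists_notMem_finset (P.image Complex.im)
  refine ⟨t, ht.1, ht.2, fun x hx he => ht' ?_⟩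
  exact Finset.mem_image.2 ⟨x, hx, he⟩

lemma track {P : Finset ℂ} (hP : Cfg P) (O : Finset (Option (ℂ × ℂ))) {g : ℝ → ℝ} :
    ∀ (n : ℕ) (t1 t2 : ℝ), t1 ≤ t2 → Gen P t1 → Gen P t2 → Track P g t1 t2 →
    (∀ x ∈ P, t1 < x.im → x.im < t2 → (side P x 1 ∈ O ↔ side P x (-1) ∈ O)) →
    (P.filter fun x => t1 < x.im ∧ x.im < t2).card ≤ n →
    (nb P (g t1) t1 ∈ O ↔ nb P (g t2) t2 ∈ O) := by
  intro n
  induction n with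
  | zero =>
    intro t1 t2 hle g1 g2 hT hO hc
    rw [nb_const hP hle _ hT]
    intro x hx hxi
    simp only [Nat.le_zero, Finset.card_eq_zero] at hc
    have : x ∈ (P.filter fun x => t1 < x.im ∧ x.im < t2) := Finset.mem_filter.2
      ⟨hx, lt_of_le_of_ne hxi.1 (g1 x hx).symm, lt_of_le_of_ne hxi.2 (g2 x hx)⟩
    rw [hc] at this; simp at this
  | succ n ih =>
    intro t1 t2 hle g1 g2 hT hO hc
    by_cases h2 : ∃ x ∈ P, ∃ y ∈ P, t1 < x.im ∧ x.im < y.im ∧ y.im < t2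
    · obtain ⟨x, hx, y, hy, h3, h4, h5⟩ := h2
      obtain ⟨s, s1, s2, s3⟩ := exists_gen P h4
      have k1 := ih t1 s (by linarith) g1 s3 (hT.mono (by
          rw [Set.uIcc_of_le (by linarith), Set.uIcc_of_le hle]
          exact Set.Icc_subset_Icc le_rfl (by linarith)))
        (fun z hz z1 z2 => hO z hz z1 (by linarith)) (by
          have : (P.filter fun x => t1 < x.im ∧ x.im < s) ⊂
              (P.filter fun x => t1 < x.im ∧ x.im < t2) := by
            rw [Finset.ssubset_iff_of_subset]
            · exact ⟨y, by simp only [Finset.mem_filter]; exact ⟨hy, by linarith, h5⟩,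
                by simp only [Finset.mem_filter]; rintro ⟨_, _, h⟩; linarith⟩
            · intro z hz
              simp only [Finset.mem_filter] at hz ⊢
              exact ⟨hz.1, hz.2.1, by linarith [hz.2.2]⟩
          have := Finset.card_lt_card this
          omega)
      have k2 := ih s t2 (by linarith) s3 g2 (hT.mono (by
          rw [Set.uIcc_of_le (by linarith), Set.uIcc_of_le hle]
          exact Set.Icc_subset_Icc (by linarith) le_rfl))
        (fun z hz z1 z2 => hO z hz (by linarith) z2) (by
          have : (P.filter fun x => s < x.im ∧ x.im < t2) ⊂
              (P.filter fun x => t1 < x.im ∧ x.im < t2) := by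
            rw [Finset.ssubset_iff_of_subset]
            · exact ⟨x, by simp only [Finset.mem_filter]; exact ⟨hx, h3, by linarith⟩,
                by simp only [Finset.mem_filter]; rintro ⟨_, h, _⟩; linarith⟩
            · intro z hz
              simp only [Finset.mem_filter] at hz ⊢
              exact ⟨hz.1, by linarith [hz.2.1], hz.2.2⟩
          have := Finset.card_lt_card this
          omega)
      exact k1.trans k2
    · by_cases h3 : ∃ x ∈ P, t1 < x.im ∧ x.im < t2
      · obtain ⟨x, hx, x1, x2⟩ := h3
        have huniq : ∀ y ∈ P, y.im ∈ Set.Icc t1 t2 → y = x := by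
          intro y hy hyi
          have y1 := lt_of_le_of_ne hyi.1 (g1 y hy).symm
          have y2 := lt_of_le_of_ne hyi.2 (g2 y hy)
          by_contra hne
          have : y.im ≠ x.im := fun h => hne (hP.inj y hy x hx h)
          rcases lt_or_gt_of_ne this with h | h
          · exact h2 ⟨y, hy, x, hx, y1, h, x2⟩
          · exact h2 ⟨x, hx, y, hy, x1, h, y2⟩
        have n1 : Near P x t1 := ⟨x1.ne, fun y hy hyi => huniq y hy (by
          rw [Set.uIcc_of_ge x1.le] at hyi; exact ⟨hyi.1, hyi.2.trans x2.le⟩)⟩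
        have n2 : Near P x t2 := ⟨x2.ne', fun y hy hyi => huniq y hy (by
          rw [Set.uIcc_of_le x2.le] at hyi; exact ⟨x1.le.trans hyi.1, hyi.2⟩)⟩
        rw [near_track hP hx n1 (hT.mono (by
            rw [Set.uIcc_of_ge x1.le, Set.uIcc_of_le hle]
            exact Set.Icc_subset_Icc le_rfl x2.le)),
          near_track hP hx n2 (hT.mono (by
            rw [Set.uIcc_of_le x2.le, Set.uIcc_of_le hle]
            exact Set.Icc_subset_Icc x1.le le_rfl))]
        split_ifs
        · rw [side_sign (σ := t1 - x.im) (τ := -1)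
            (by constructor <;> intro h <;> linarith),
            side_sign (σ := t2 - x.im) (τ := 1)
            (by constructor <;> intro h <;> linarith)]
          exact (hO x hx x1 x2).symm
        · rfl
      · rw [nb_const hP hle _ hT]
        intro x hx hxi
        exact h3 ⟨x, hx, lt_of_le_of_ne hxi.1 (g1 x hx).symm, lt_of_le_of_ne hxi.2 (g2 x hx)⟩

/-! ### The outer component -/

lemma Near.gen {P : Finset ℂ} {x : ℂ} {t : ℝ} (h : Near P x t) : Gen P t := by
  intro y hy he
  have := h.2 y hy (by rw [he]; exact Set.right_mem_uIcc)
  rw [this] at he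
  exact h.1 he.symm

lemma exists_near_above {P : Finset ℂ} (hP : Cfg P) {x : ℂ} (hx : x ∈ P) :
    ∃ t, x.im < t ∧ Near P x t := by
  by_cases h : (P.filter fun y => x.im < y.im).Nonempty
  · obtain ⟨y, hy, hy'⟩ := Finset.exists_min_image _ Complex.im h
    simp only [Finset.mem_filter] at hy hy'
    refine ⟨(x.im + y.im) / 2, by linarith, by linarith, ?_⟩
    intro z hz hz'
    rw [Set.uIcc_of_le (by linarith)] at hz'
    by_contra hne
    have h1 : z.im ≠ x.im := fun h => hne (hP.inj z hz x hx h)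
    have := hy' z ⟨hz, lt_of_le_of_ne hz'.1 h1.symm⟩
    linarith [hz'.2]
  · refine ⟨x.im + 1, by linarith, by linarith, ?_⟩
    intro z hz hz'
    rw [Set.uIcc_of_le (by linarith)] at hz'
    by_contra hne
    have h1 : z.im ≠ x.im := fun h => hne (hP.inj z hz x hx h)
    exact h ⟨z, Finset.mem_filter.2 ⟨hz, lt_of_le_of_ne hz'.1 h1.symm⟩⟩

lemma exists_near_below {P : Finset ℂ} (hP : Cfg P) {x : ℂ} (hx : x ∈ P) :
    ∃ t, t < x.im ∧ Near P x t := by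
  by_cases h : (P.filter fun y => y.im < x.im).Nonempty
  · obtain ⟨y, hy, hy'⟩ := Finset.exists_max_image _ Complex.im h
    simp only [Finset.mem_filter] at hy hy'
    refine ⟨(x.im + y.im) / 2, by linarith, by linarith, ?_⟩
    intro z hz hz'
    rw [Set.uIcc_of_ge (by linarith)] at hz'
    by_contra hne
    have h1 : z.im ≠ x.im := fun h => hne (hP.inj z hz x hx h)
    have := hy' z ⟨hz, lt_of_le_of_ne hz'.2 h1⟩
    linarith [hz'.1]
  · refine ⟨x.im - 1, by linarith, by linarith, ?_⟩
    intro z hz hz'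
    rw [Set.uIcc_of_ge (by linarith)] at hz'
    by_contra hne
    have h1 : z.im ≠ x.im := fun h => hne (hP.inj z hz x hx h)
    exact h ⟨z, Finset.mem_filter.2 ⟨hz, lt_of_le_of_ne hz'.2 h1⟩⟩

lemma exists_comp {P : Finset ℂ} (hP : Cfg P) (hne : P.Nonempty) :
    ∃ O : Finset (Option (ℂ × ℂ)), none ∈ O ∧
      (∀ x ∈ P, side P x 1 ∈ O ↔ side P x (-1) ∈ O) ∧
      O.card ≤ (P.filter fun x => side P x 1 ∈ O).card := by
  obtain ⟨x1, hx1, hmin⟩ := Finset.exists_min_image P Complex.im hne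
  obtain ⟨xt, hxt, hmax⟩ := Finset.exists_max_image P Complex.im hne
  obtain ⟨xl, hxl, hleft⟩ := Finset.exists_min_image P Complex.re hne
  obtain ⟨O, O1, O2, O3⟩ := exists_component (P.erase x1) (fun x => side P x 1)
    (fun x => side P x (-1)) none
  have hM : ∀ a b, Track P (fun _ => xl.re - 1) a b := by
    intro a b
    refine ⟨continuous_const, ?_, ?_⟩
    · intro f hf
      right
      intro r _ h1 h2
      obtain ⟨s, s0, s1, _, hp⟩ := param hf h1 h2
      obtain ⟨m1, m2, _, _⟩ := mem_E.1 hf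
      have a1 := hleft _ m1
      have a2 := hleft _ m2
      rw [hp]
      intro h
      nlinarith [mul_nonneg s0 (sub_nonneg.2 a2), mul_nonneg (sub_nonneg.2 s1) (sub_nonneg.2 a1)]
    · intro x hx _
      have := hleft x hx
      intro h; linarith
  have nopass : ∀ f ∈ E P, ∀ t, t ≤ x1.im → ¬ act f t := by
    intro f hf t ht h
    have := hmin _ (mem_E.1 hf).1
    linarith [h.1]
  have nb0 : ∀ s t, (∀ f ∈ E P, ¬ act f t) → nb P s t = none := by
    intro s t h
    unfold nb
    rw [amin_eq_none, Finset.filter_eq_empty_iff]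
    intro f hf h'
    exact h f hf h'.1
  have hcond : xl.re - 1 < x1.re ∧
      (∀ f ∈ E P, act f x1.im → xl.re - 1 < pos f x1.im → x1.re < pos f x1.im) :=
    ⟨by have := hleft _ hx1; linarith, fun f hf h => absurd h (nopass f hf _ le_rfl)⟩
  have hdn : side P x1 (-1) = none := by
    obtain ⟨t, ht, hn⟩ := exists_near_below hP hx1
    have := near_track hP hx1 hn (hM _ _)
    rw [if_pos hcond, side_sign (σ := t - x1.im) (τ := -1)
      (by constructor <;> intro h <;> linarith)] at this
    rw [← this]
    exact nb0 _ _ (fun f hf => nopass f hf _ ht.le)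
  have hup : side P x1 1 ∈ O := by
    obtain ⟨t, ht, hn⟩ := exists_near_above hP hx1
    have h1 := near_track hP hx1 hn (hM _ _)
    rw [if_pos hcond, side_sign (σ := t - x1.im) (τ := 1)
      (by constructor <;> intro h <;> linarith)] at h1
    rw [← h1]
    have hgt : Gen P (max t (xt.im + 1)) := by
      intro y hy he
      have := hmax y hy
      have := le_max_right t (xt.im + 1)
      linarith
    rw [track hP O _ t (max t (xt.im + 1)) (le_max_left _ _) hn.gen hgt (hM _ _) _ le_rfl]
    · rw [nb0]
      · exact O1
      · intro f hf h
        have := hmax _ (mem_E.1 hf).2.1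
        have := le_max_right t (xt.im + 1)
        linarith [h.2]
    · intro x hx h1 h2
      exact O2 x (Finset.mem_erase.2 ⟨by rintro rfl; linarith, hx⟩)
  refine ⟨O, O1, ?_, O3.trans ?_⟩
  · intro x hx
    by_cases h : x = x1
    · subst h
      rw [hdn]; simp [O1, hup]
    · exact O2 x (Finset.mem_erase.2 ⟨h, hx⟩)
  · apply Nat.succ_le_of_lt
    apply Finset.card_lt_card
    rw [Finset.ssubset_iff_of_subset]
    · exact ⟨x1, Finset.mem_filter.2 ⟨hx1, hup⟩, by simp⟩
    · intro z hz
      simp only [Finset.mem_filter, Finset.mem_erase] at hz ⊢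
      exact ⟨hz.1.2, hz.2⟩

/-! ### Sides of darts -/

def RO (P : Finset ℂ) (O : Finset (Option (ℂ × ℂ))) (e : ℂ × ℂ) : Prop :=
  ∃ t, Gen P t ∧ act e t ∧ nb P (pos e t) t ∈ O

def LO (P : Finset ℂ) (O : Finset (Option (ℂ × ℂ))) (a : ℂ × ℂ) : Prop :=
  if a.1.im < a.2.im then some a ∈ O else RO P O a.swap

lemma edge_track {P : Finset ℂ} (hP : Cfg P) {e : ℂ × ℂ} (he : e ∈ E P) {t1 t2 : ℝ}
    (h1 : act e t1) (h2 : act e t2) : Track P (pos e) t1 t2 := by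
  have hin : ∀ r ∈ Set.uIcc t1 t2, act e r := by
    intro r hr
    rw [Set.mem_uIcc] at hr
    obtain ⟨a, b⟩ := h1
    obtain ⟨c, d⟩ := h2
    rcases hr with hr | hr <;> constructor <;> linarith [hr.1, hr.2]
  refine ⟨continuous_pos e, ?_, ?_⟩
  · intro f hf
    by_cases hfe : f = e
    · left; intro r _; rw [hfe]
    · right
      intro r hr f1 f2 hp
      have hr' := hin r hr
      rcases cross hP hf he f1 f2 hr'.1.le hr'.2.le hp with h | ⟨y, _, hy, hyr⟩
      · exact hfe h
      · rcases hy with rfl | rfl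
        · exact absurd hyr hr'.1.ne
        · exact absurd hyr hr'.2.ne'
  · intro x hx hxi
    exact pass_ne hP hx he (hin _ hxi)

lemma RO_iff {P : Finset ℂ} (hP : Cfg P) {O : Finset (Option (ℂ × ℂ))}
    (hO : ∀ x ∈ P, side P x 1 ∈ O ↔ side P x (-1) ∈ O) {e : ℂ × ℂ} (he : e ∈ E P) {t : ℝ}
    (hg : Gen P t) (ht : act e t) : RO P O e ↔ nb P (pos e t) t ∈ O := by
  constructor
  · rintro ⟨s, s1, s2, s3⟩
    rcases le_total s t with h | h
    · exact (track hP O _ s t h s1 hg (edge_track hP he s2 ht) (fun x hx _ _ => hO x hx) le_rfl).1 s3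
    · exact (track hP O _ t s h hg s1 (edge_track hP he ht s2) (fun x hx _ _ => hO x hx) le_rfl).2 s3
  · intro h
    exact ⟨t, hg, ht, h⟩

lemma corner_nb {P : Finset ℂ} (hP : Cfg P) {x : ℂ} (hx : x ∈ P) {t : ℝ} (hn : Near P x t)
    {e : ℂ × ℂ} (he : e ∈ Inc P x (t - x.im)) :
    nb P (pos e t) t = if ((Inc P x (t - x.im)).filter
        fun f => key (t - x.im) e < key (t - x.im) f).Nonempty
      then amin ((Inc P x (t - x.im)).filter
        fun f => key (t - x.im) e < key (t - x.im) f) (key (t - x.im))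
      else nb P x.re x.im := by
  apply nb_near hP hn (Finset.filter_subset _ _)
  intro f hf
  have ea := near_inc_act hn he
  have ex : pos e x.im = x.re := by rw [Inc_pos he]; ring
  simp only [Finset.mem_filter]
  constructor
  · rintro ⟨h1, h2⟩
    rcases near_pass_or_inc hn hf h1 with h3 | h3
    · right
      refine ⟨h3, ?_⟩
      rcases lt_or_gt_of_ne (pass_ne hP hx hf h3) with h4 | h4
      · rw [← ex] at h4
        have := near_order hP hn hf (Inc_E he) h1 ea h4
        linarith
      · exact h4
    · left
      exact ⟨h3, (inc_key hn he h3).1 h2⟩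
  · rintro (⟨h1, h2⟩ | ⟨h1, h2⟩)
    · exact ⟨near_inc_act hn h1, (inc_key hn he h1).2 h2⟩
    · have fa := near_act_of_pass hn hf h1
      refine ⟨fa, near_order hP hn (Inc_E he) hf ea fa ?_⟩
      rw [ex]; exact h2

/-! ### Angles -/

def kk (a : ℂ × ℂ) : ℝ := Complex.arg (a.2 - a.1)

lemma sl_swap (a : ℂ × ℂ) : sl a.swap = sl a := by
  unfold sl
  simp only [Prod.fst_swap, Prod.snd_swap]
  rw [← neg_sub a.2.re, ← neg_sub a.2.im, neg_div_neg_eq]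

lemma cot_lt {α β : ℝ} (h : 0 < Real.sin α * Real.sin β) (h1 : β - α < Real.pi)
    (h2 : -Real.pi < β - α) :
    α < β ↔ Real.cos β / Real.sin β < Real.cos α / Real.sin α := by
  have ha : Real.sin α ≠ 0 := left_ne_zero_of_mul h.ne'
  have hb : Real.sin β ≠ 0 := right_ne_zero_of_mul h.ne'
  have e : Real.cos α / Real.sin α - Real.cos β / Real.sin β =
      Real.sin (β - α) / (Real.sin α * Real.sin β) := by
    rw [Real.sin_sub]; field_simp
  constructor
  · intro hlt
    have : 0 < Real.sin (β - α) := Real.sin_pos_of_pos_of_lt_pi (by linarith) h1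
    have := div_pos this h
    linarith
  · intro hlt
    by_contra hc
    push Not at hc
    have : Real.sin (β - α) ≤ 0 := Real.sin_nonpos_of_nonpos_of_neg_pi_le (by linarith) h2.le
    have := div_nonpos_of_nonpos_of_nonneg this h.le
    linarith

lemma re_div_im {z : ℂ} (hz : z ≠ 0) :
    z.re / z.im = Real.cos z.arg / Real.sin z.arg := by
  rw [Complex.cos_arg hz, Complex.sin_arg]
  have : ‖z‖ ≠ 0 := norm_ne_zero_iff.2 hz
  rw [div_div_div_cancel_right₀ this]

lemma arg_up {z : ℂ} (h : 0 < z.im) : 0 < z.arg ∧ z.arg < Real.pi := by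
  constructor
  · apply lt_of_le_of_ne (Complex.arg_nonneg_iff.2 h.le)
    intro h0
    have := (Complex.arg_eq_zero_iff.1 h0.symm).2
    linarith
  · apply lt_of_le_of_ne (Complex.arg_le_pi z)
    intro h0
    have := (Complex.arg_eq_pi_iff.1 h0).2
    linarith

lemma arg_dn {z : ℂ} (h : z.im < 0) : -Real.pi < z.arg ∧ z.arg < 0 :=
  ⟨Complex.neg_pi_lt_arg z, Complex.arg_neg_iff.2 h⟩

lemma arg_lt_iff {z w : ℂ} (h : 0 < z.im * w.im) :
    z.arg < w.arg ↔ w.re / w.im < z.re / z.im := by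
  have hz : z ≠ 0 := by rintro rfl; simp at h
  have hw : w ≠ 0 := by rintro rfl; simp at h
  rw [re_div_im hz, re_div_im hw]
  have hp := Real.pi_pos
  rcases mul_pos_iff.1 h with ⟨h1, h2⟩ | ⟨h1, h2⟩
  · have a1 := arg_up h1
    have a2 := arg_up h2
    exact cot_lt (mul_pos (Real.sin_pos_of_pos_of_lt_pi a1.1 a1.2)
      (Real.sin_pos_of_pos_of_lt_pi a2.1 a2.2)) (by linarith) (by linarith)
  · have a1 := arg_dn h1
    have a2 := arg_dn h2
    exact cot_lt (mul_pos_of_neg_of_neg (Real.sin_neg_of_neg_of_neg_pi_lt a1.2 a1.1)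
      (Real.sin_neg_of_neg_of_neg_pi_lt a2.2 a2.1)) (by linarith) (by linarith)

lemma kk_lt_iff {a b : ℂ × ℂ} (h : 0 < (a.2.im - a.1.im) * (b.2.im - b.1.im)) :
    kk a < kk b ↔ sl b < sl a := by
  unfold kk sl
  rw [arg_lt_iff (by simpa using h)]
  simp

lemma kk_up {a : ℂ × ℂ} (h : a.1.im < a.2.im) : 0 < kk a ∧ kk a < Real.pi :=
  arg_up (by simpa using h)

lemma kk_dn {a : ℂ × ℂ} (h : a.2.im < a.1.im) : -Real.pi < kk a ∧ kk a < 0 :=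
  arg_dn (by simpa using h)

lemma swap_mem_D {P : Finset ℂ} {a : ℂ × ℂ} (h : a ∈ D P) : a.swap ∈ D P := by
  rw [mem_D] at h ⊢
  exact ⟨h.2.1, h.1, by rw [dist_comm]; exact h.2.2⟩

lemma D_ne {P : Finset ℂ} (hP : Cfg P) {a : ℂ × ℂ} (h : a ∈ D P) : a.1.im ≠ a.2.im := by
  rw [mem_D] at h
  intro he
  have := hP.inj _ h.1 _ h.2.1 he
  rw [this] at h
  simp at h

lemma kk_inj {P : Finset ℂ} {a b : ℂ × ℂ} (ha : a ∈ D P) (hb : b ∈ D P)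
    (h1 : a.1 = b.1) (h : kk a = kk b) : a = b := by
  rw [mem_D] at ha hb
  have e1 : ‖a.2 - a.1‖ = 2 := by rw [← dist_eq_norm, dist_comm]; exact ha.2.2
  have e2 : ‖b.2 - b.1‖ = 2 := by rw [← dist_eq_norm, dist_comm]; exact hb.2.2
  have := Complex.ext_norm_arg (e1.trans e2.symm) h
  rw [h1] at this
  exact Prod.ext h1 (by simpa using this)

lemma kk_swap_up {a : ℂ × ℂ} (h : a.1.im < a.2.im) : kk a.swap = kk a - Real.pi := by
  unfold kk
  simp only [Prod.fst_swap, Prod.snd_swap]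
  rw [← neg_sub a.2 a.1, Complex.arg_neg_eq_arg_sub_pi_of_im_pos (by simpa using h)]

lemma kk_swap_dn {a : ℂ × ℂ} (h : a.2.im < a.1.im) : kk a.swap = kk a + Real.pi := by
  unfold kk
  simp only [Prod.fst_swap, Prod.snd_swap]
  rw [← neg_sub a.2 a.1, Complex.arg_neg_eq_arg_add_pi_of_im_neg (by simpa using h)]

/-- angular separation -/
lemma kk_sep {P : Finset ℂ} (hP : Cfg P) {a b : ℂ × ℂ} (ha : a ∈ D P) (hb : b ∈ D P)
    (h1 : a.1 = b.1) (h : kk a < kk b) :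
    Real.pi / 3 ≤ kk b - kk a ∧ kk b - kk a ≤ 2 * Real.pi - Real.pi / 3 := by
  have hne : a.2 ≠ b.2 := by
    intro h2
    rw [show a = b from Prod.ext h1 h2] at h
    exact lt_irrefl _ h
  rw [mem_D] at ha hb
  have e1 : ‖a.2 - a.1‖ = 2 := by rw [← dist_eq_norm, dist_comm]; exact ha.2.2
  have e2 : ‖b.2 - b.1‖ = 2 := by rw [← dist_eq_norm, dist_comm]; exact hb.2.2
  have e3 := hP.pack _ ha.2.1 _ hb.2.1 hne
  have e3' : 4 ≤ dist a.2 b.2 ^ 2 := by nlinarith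
  rw [dist_sq] at e3'
  have hpi := Real.pi_pos
  have r1 : (a.2 - a.1).re = 2 * Real.cos (kk a) := by
    rw [kk, ← e1, Complex.norm_mul_cos_arg]
  have r2 : (a.2 - a.1).im = 2 * Real.sin (kk a) := by
    rw [kk, ← e1, Complex.norm_mul_sin_arg]
  have r3 : (b.2 - b.1).re = 2 * Real.cos (kk b) := by
    rw [kk, ← e2, Complex.norm_mul_cos_arg]
  have r4 : (b.2 - b.1).im = 2 * Real.sin (kk b) := by
    rw [kk, ← e2, Complex.norm_mul_sin_arg]
  simp only [Complex.sub_re, Complex.sub_im] at r1 r2 r3 r4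
  rw [← h1] at r3 r4
  have hc : Real.cos (kk b - kk a) ≤ 1 / 2 := by
    rw [Real.cos_sub]
    have s1 := Real.sin_sq_add_cos_sq (kk a)
    have s2 := Real.sin_sq_add_cos_sq (kk b)
    have t1 : a.2.re - b.2.re = 2 * Real.cos (kk a) - 2 * Real.cos (kk b) := by linarith
    have t2 : a.2.im - b.2.im = 2 * Real.sin (kk a) - 2 * Real.sin (kk b) := by linarith
    rw [t1, t2] at e3'
    nlinarith
  have b1 : kk b ≤ Real.pi := Complex.arg_le_pi _
  have b2 : -Real.pi < kk a := Complex.neg_pi_lt_arg _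
  constructor
  · by_contra hcon
    push Not at hcon
    have := Real.cos_lt_cos_of_nonneg_of_le_pi (x := kk b - kk a) (y := Real.pi / 3)
      (by linarith) (by linarith) hcon
    rw [Real.cos_pi_div_three] at this
    linarith
  · by_contra hcon
    push Not at hcon
    have := Real.cos_lt_cos_of_nonneg_of_le_pi (x := 2 * Real.pi - (kk b - kk a))
      (y := Real.pi / 3) (by linarith) (by linarith) (by linarith)
    rw [Real.cos_pi_div_three, Real.cos_two_pi_sub] at this
    linarith

/-! ### The corner lemma -/

section corner
variable {P : Finset ℂ} (hP : Cfg P) {O : Finset (Option (ℂ × ℂ))}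
  (hO : ∀ x ∈ P, side P x 1 ∈ O ↔ side P x (-1) ∈ O)

lemma mem_Inc_pos {x : ℂ} {σ : ℝ} (hσ : 0 < σ) {f : ℂ × ℂ} :
    f ∈ Inc P x σ ↔ f ∈ E P ∧ f.1 = x := by
  simp [Inc, hσ]

lemma mem_Inc_neg {x : ℂ} {σ : ℝ} (hσ : ¬ 0 < σ) {f : ℂ × ℂ} :
    f ∈ Inc P x σ ↔ f ∈ E P ∧ f.2 = x := by
  simp [Inc, hσ]

lemma E_D {f : ℂ × ℂ} (h : f ∈ E P) : f ∈ D P := (Finset.mem_filter.1 h).1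

lemma E_up {f : ℂ × ℂ} (h : f ∈ E P) : f.1.im < f.2.im := (Finset.mem_filter.1 h).2

lemma up_E {a : ℂ × ℂ} (h : a ∈ D P) (h' : a.1.im < a.2.im) : a ∈ E P :=
  Finset.mem_filter.2 ⟨h, h'⟩

lemma dn_E {a : ℂ × ℂ} (h : a ∈ D P) (h' : a.2.im < a.1.im) : a.swap ∈ E P :=
  Finset.mem_filter.2 ⟨swap_mem_D h, h'⟩

/-- the right side of an upward dart -/
lemma RO_up_some (hP : Cfg P) (hO : ∀ x ∈ P, side P x 1 ∈ O ↔ side P x (-1) ∈ O)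
    {a b : ℂ × ℂ} (ha : a ∈ E P) (hb : b ∈ E P) (h1 : a.1 = b.1)
    (hlt : kk a < kk b)
    (hbt : ∀ c ∈ D P, c.1 = b.1 → ¬ (kk a < kk c ∧ kk c < kk b)) :
    RO P O b ↔ some a ∈ O := by
  have hx := (mem_E.1 hb).1
  obtain ⟨t, ht, hn⟩ := exists_near_above hP hx
  have hσ : 0 < t - b.1.im := by linarith
  have hbI : b ∈ Inc P b.1 (t - b.1.im) := (mem_Inc_pos hσ).2 ⟨hb, rfl⟩
  have kp : ∀ {c : ℂ × ℂ}, key (t - b.1.im) c = sl c := by intro c; simp [key, hσ]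
  have cmp : ∀ {c d : ℂ × ℂ}, c ∈ E P → d ∈ E P → (kk c < kk d ↔ sl d < sl c) := by
    intro c d hc hd
    exact kk_lt_iff (mul_pos (by linarith [E_up hc]) (by linarith [E_up hd]))
  rw [RO_iff hP hO hb hn.gen (near_inc_act hn hbI), corner_nb hP hx hn hbI]
  have haJ : a ∈ (Inc P b.1 (t - b.1.im)).filter
      fun f => key (t - b.1.im) b < key (t - b.1.im) f := by
    rw [Finset.mem_filter, mem_Inc_pos hσ, kp, kp]
    exact ⟨⟨ha, h1⟩, (cmp ha hb).1 hlt⟩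
  rw [if_pos ⟨a, haJ⟩, amin_eq haJ]
  intro c hc hca
  rw [Finset.mem_filter, mem_Inc_pos hσ, kp, kp] at hc
  rw [kp, kp, ← cmp hc.1.1 ha]
  have h2 := (cmp hc.1.1 hb).2 hc.2
  have h3 := hbt c (E_D hc.1.1) hc.1.2
  apply lt_of_le_of_ne
  · by_contra h4
    push Not at h4
    exact h3 ⟨h4, h2⟩
  · intro h4
    exact hca (kk_inj (E_D hc.1.1) (E_D ha) (hc.1.2.trans h1.symm) h4)

lemma RO_up_none (hP : Cfg P) (hO : ∀ x ∈ P, side P x 1 ∈ O ↔ side P x (-1) ∈ O)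
    {b : ℂ × ℂ} (hb : b ∈ E P)
    (hbt : ∀ c ∈ E P, c.1 = b.1 → ¬ kk c < kk b) :
    RO P O b ↔ nb P b.1.re b.1.im ∈ O := by
  have hx := (mem_E.1 hb).1
  obtain ⟨t, ht, hn⟩ := exists_near_above hP hx
  have hσ : 0 < t - b.1.im := by linarith
  have hbI : b ∈ Inc P b.1 (t - b.1.im) := (mem_Inc_pos hσ).2 ⟨hb, rfl⟩
  have kp : ∀ {c : ℂ × ℂ}, key (t - b.1.im) c = sl c := by intro c; simp [key, hσ]
  have cmp : ∀ {c d : ℂ × ℂ}, c ∈ E P → d ∈ E P → (kk c < kk d ↔ sl d < sl c) := by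
    intro c d hc hd
    exact kk_lt_iff (mul_pos (by linarith [E_up hc]) (by linarith [E_up hd]))
  rw [RO_iff hP hO hb hn.gen (near_inc_act hn hbI), corner_nb hP hx hn hbI, if_neg]
  rintro ⟨c, hc⟩
  rw [Finset.mem_filter, mem_Inc_pos hσ, kp, kp] at hc
  exact hbt c hc.1.1 hc.1.2 ((cmp hc.1.1 hb).2 hc.2)

/-- the left side of a downward dart `a` -/
lemma RO_dn_some (hP : Cfg P) (hO : ∀ x ∈ P, side P x 1 ∈ O ↔ side P x (-1) ∈ O)
    {a b : ℂ × ℂ} (ha : a ∈ D P) (ha' : a.2.im < a.1.im) (hb : b ∈ D P) (hb' : b.2.im < b.1.im)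
    (h1 : b.1 = a.1) (hlt : kk a < kk b)
    (hbt : ∀ c ∈ D P, c.1 = a.1 → ¬ (kk a < kk c ∧ kk c < kk b)) :
    RO P O a.swap ↔ some b.swap ∈ O := by
  have hx := (mem_D.1 ha).1
  obtain ⟨t, ht, hn⟩ := exists_near_below hP hx
  have hσ : ¬ 0 < t - a.1.im := by linarith
  have haE := dn_E ha ha'
  have hbE := dn_E hb hb'
  have haI : a.swap ∈ Inc P a.1 (t - a.1.im) := (mem_Inc_neg hσ).2 ⟨haE, rfl⟩
  have kp : ∀ {c : ℂ × ℂ}, key (t - a.1.im) c = - sl c.swap := by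
    intro c; rw [sl_swap]; simp [key, hσ]
  have cmp : ∀ {c d : ℂ × ℂ}, c.swap ∈ E P → d.swap ∈ E P →
      (kk c < kk d ↔ - sl c < - sl d) := by
    intro c d hc hd
    have u1 := E_up hc
    have u2 := E_up hd
    simp only [Prod.fst_swap, Prod.snd_swap] at u1 u2
    rw [kk_lt_iff (mul_pos_of_neg_of_neg (by linarith) (by linarith)), neg_lt_neg_iff]
  rw [RO_iff hP hO haE hn.gen (near_inc_act hn haI), corner_nb hP hx hn haI]
  have hbJ : b.swap ∈ (Inc P a.1 (t - a.1.im)).filter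
      fun f => key (t - a.1.im) a.swap < key (t - a.1.im) f := by
    rw [Finset.mem_filter, mem_Inc_neg hσ, kp, kp, Prod.swap_swap, Prod.swap_swap]
    exact ⟨⟨hbE, h1⟩, (cmp haE hbE).1 hlt⟩
  rw [if_pos ⟨_, hbJ⟩, amin_eq hbJ]
  intro c hc hca
  rw [Finset.mem_filter, mem_Inc_neg hσ, kp, kp, Prod.swap_swap] at hc
  have hcE : c.swap.swap ∈ E P := hc.1.1
  rw [kp, kp, Prod.swap_swap, ← cmp hbE hcE]
  have h2 := (cmp haE hcE).2 hc.2
  have h3 := hbt c.swap (swap_mem_D (E_D hc.1.1)) hc.1.2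
  apply lt_of_le_of_ne
  · by_contra h4
    push Not at h4
    exact h3 ⟨h2, h4⟩
  · intro h4
    have := kk_inj hb (swap_mem_D (E_D hc.1.1)) (h1.trans hc.1.2.symm) h4
    exact hca (by rw [this, Prod.swap_swap])

lemma RO_dn_none (hP : Cfg P) (hO : ∀ x ∈ P, side P x 1 ∈ O ↔ side P x (-1) ∈ O)
    {a : ℂ × ℂ} (ha : a ∈ D P) (ha' : a.2.im < a.1.im)
    (hbt : ∀ c ∈ D P, c.1 = a.1 → c.2.im < c.1.im → ¬ kk a < kk c) :
    RO P O a.swap ↔ nb P a.1.re a.1.im ∈ O := by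
  have hx := (mem_D.1 ha).1
  obtain ⟨t, ht, hn⟩ := exists_near_below hP hx
  have hσ : ¬ 0 < t - a.1.im := by linarith
  have haE := dn_E ha ha'
  have haI : a.swap ∈ Inc P a.1 (t - a.1.im) := (mem_Inc_neg hσ).2 ⟨haE, rfl⟩
  have kp : ∀ {c : ℂ × ℂ}, key (t - a.1.im) c = - sl c.swap := by
    intro c; rw [sl_swap]; simp [key, hσ]
  rw [RO_iff hP hO haE hn.gen (near_inc_act hn haI), corner_nb hP hx hn haI, if_neg]
  rintro ⟨c, hc⟩
  rw [Finset.mem_filter, mem_Inc_neg hσ, kp, kp, Prod.swap_swap] at hc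
  have u := E_up hc.1.1
  refine hbt c.swap (swap_mem_D (E_D hc.1.1)) hc.1.2 u ?_
  rw [kk_lt_iff (mul_pos_of_neg_of_neg (by linarith)
    (by simp only [Prod.fst_swap, Prod.snd_swap]; linarith))]
  linarith [hc.2]

lemma LO_up {a : ℂ × ℂ} (h : a.1.im < a.2.im) : LO P O a ↔ some a ∈ O := by
  simp [LO, h]

lemma LO_dn {a : ℂ × ℂ} (h : a.2.im < a.1.im) : LO P O a ↔ RO P O a.swap := by
  simp [LO, not_lt.2 h.le]

/-- `a` has maximal argument at its vertex -/
lemma LO_max (hP : Cfg P) (hO : ∀ x ∈ P, side P x 1 ∈ O ↔ side P x (-1) ∈ O)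
    {a : ℂ × ℂ} (ha : a ∈ D P) (hmax : ∀ b ∈ D P, b.1 = a.1 → kk b ≤ kk a) :
    LO P O a ↔ side P a.1 1 ∈ O := by
  have h01 : (0:ℝ) < 1 := one_pos
  rcases lt_or_gt_of_ne (D_ne hP ha) with h | h
  · rw [LO_up h]
    have haI : a ∈ Inc P a.1 1 := (mem_Inc_pos h01).2 ⟨up_E ha h, rfl⟩
    rw [side, if_pos ⟨a, haI⟩, amin_eq haI]
    intro b hb hba
    rw [mem_Inc_pos h01] at hb
    simp only [key, if_pos h01]
    rw [← kk_lt_iff (mul_pos (by linarith [E_up hb.1]) (by linarith))]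
    apply lt_of_le_of_ne (hmax b (E_D hb.1) hb.2)
    intro he
    exact hba (kk_inj (E_D hb.1) ha hb.2 he)
  · rw [LO_dn h, RO_dn_none hP hO ha h (fun c hc h1 _ => not_lt.2 (hmax c hc h1)), side, if_neg]
    rintro ⟨b, hb⟩
    rw [mem_Inc_pos h01] at hb
    have := hmax b (E_D hb.1) hb.2
    linarith [(kk_up (E_up hb.1)).1, (kk_dn h).2]

lemma LO_swap_min (hP : Cfg P) (hO : ∀ x ∈ P, side P x 1 ∈ O ↔ side P x (-1) ∈ O)
    {b : ℂ × ℂ} (hb : b ∈ D P) (hmin : ∀ c ∈ D P, c.1 = b.1 → kk b ≤ kk c) :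
    LO P O b.swap ↔ side P b.1 (-1) ∈ O := by
  have h01 : ¬ (0:ℝ) < -1 := by norm_num
  rcases lt_or_gt_of_ne (D_ne hP hb) with h | h
  · rw [LO_dn (by exact h), Prod.swap_swap,
      RO_up_none hP hO (up_E hb h) (fun c hc h1 => not_lt.2 (hmin c (E_D hc) h1)), side, if_neg]
    rintro ⟨c, hc⟩
    rw [mem_Inc_neg h01] at hc
    have := hmin c.swap (swap_mem_D (E_D hc.1)) hc.2
    have u := kk_dn (a := c.swap) (E_up hc.1)
    linarith [(kk_up h).1]
  · rw [LO_up (by exact h)]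
    have hbI : b.swap ∈ Inc P b.1 (-1) := (mem_Inc_neg h01).2 ⟨dn_E hb h, rfl⟩
    rw [side, if_pos ⟨_, hbI⟩, amin_eq hbI]
    intro c hc hcb
    rw [mem_Inc_neg h01] at hc
    have u := E_up hc.1
    simp only [key, if_neg h01]
    rw [sl_swap, ← sl_swap c, neg_lt_neg_iff, ← kk_lt_iff (mul_pos_of_neg_of_neg (by linarith)
      (by simp only [Prod.fst_swap, Prod.snd_swap]; linarith))]
    apply lt_of_le_of_ne (hmin c.swap (swap_mem_D (E_D hc.1)) hc.2)
    intro he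
    have := kk_inj hb (swap_mem_D (E_D hc.1)) hc.2.symm he
    exact hcb (by rw [this, Prod.swap_swap])

lemma corner (hP : Cfg P) (hO : ∀ x ∈ P, side P x 1 ∈ O ↔ side P x (-1) ∈ O)
    {a b : ℂ × ℂ} (ha : a ∈ D P) (hb : b ∈ D P) (h1 : b.1 = a.1)
    (h : (kk a < kk b ∧ ∀ c ∈ D P, c.1 = a.1 → ¬ (kk a < kk c ∧ kk c < kk b)) ∨
        ((∀ c ∈ D P, c.1 = a.1 → kk c ≤ kk a) ∧ ∀ c ∈ D P, c.1 = a.1 → kk b ≤ kk c)) :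
    LO P O a ↔ LO P O b.swap := by
  rcases h with ⟨hlt, hbt⟩ | ⟨hmax, hmin⟩
  · rcases lt_or_gt_of_ne (D_ne hP ha) with ua | ua <;>
      rcases lt_or_gt_of_ne (D_ne hP hb) with ub | ub
    · rw [LO_up ua, LO_dn (by exact ub), Prod.swap_swap,
        RO_up_some hP hO (up_E ha ua) (up_E hb ub) h1.symm hlt (by rw [h1]; exact hbt)]
    · linarith [(kk_up ua).1, (kk_dn ub).2]
    · rw [LO_dn ua, LO_dn (by exact ub), Prod.swap_swap,
        RO_dn_none hP hO ha ua, RO_up_none hP hO (up_E hb ub), h1]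
      · intro c hc h2 h3
        refine hbt c (E_D hc) (h2.trans h1) ⟨?_, h3⟩
        linarith [(kk_up (E_up hc)).1, (kk_dn ua).2]
      · intro c hc h2 h3 h4
        refine hbt c hc h2 ⟨h4, ?_⟩
        linarith [(kk_up ub).1, (kk_dn h3).2]
    · rw [LO_dn ua, LO_up (by exact ub), RO_dn_some hP hO ha ua hb ub h1 hlt hbt]
  · rw [LO_max hP hO ha hmax, LO_swap_min hP hO hb (by rw [h1]; exact hmin), h1]
    exact hO _ (mem_D.1 ha).1

end corner


/-! ### The outer face -/

lemma sum_perm {α : Type*} (A : Finset α) (g : α → α) (hm : ∀ a ∈ A, g a ∈ A)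
    (hi : ∀ a ∈ A, ∀ b ∈ A, g a = g b → a = b) (f : α → ℝ) :
    ∑ a ∈ A, f (g a) = ∑ a ∈ A, f a := by
  refine Finset.sum_nbij g hm (fun a ha b hb h => hi a ha b hb h) ?_ (fun _ _ => rfl)
  exact Finset.surjOn_of_injOn_of_card_le g hm (fun a ha b hb h => hi a ha b hb h) le_rfl

def wrap (P : Finset ℂ) (a : ℂ × ℂ) : Prop := ∀ b ∈ D P, b.1 = a.1 → kk b ≤ kk a

lemma wrap_card {P : Finset ℂ} (hdeg : ∀ x ∈ P, ∃ a ∈ D P, a.1 = x) (V : Finset ℂ) (hV : V ⊆ P) :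
    ((D P).filter fun a => a.1 ∈ V ∧ wrap P a).card = V.card := by
  apply Finset.card_nbij Prod.fst
  · intro a ha
    exact (Finset.mem_filter.1 ha).2.1
  · intro a ha b hb h
    obtain ⟨a1, a2, a3⟩ := Finset.mem_filter.1 ha
    obtain ⟨b1, b2, b3⟩ := Finset.mem_filter.1 hb
    exact kk_inj a1 b1 h (le_antisymm (b3 a a1 h) (a3 b b1 h.symm))
  · intro x hx
    obtain ⟨a, ha, hax⟩ := hdeg x (hV hx)
    obtain ⟨m, hm, hmax⟩ := Finset.exists_max_image ((D P).filter fun a => a.1 = x) kk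
      ⟨a, Finset.mem_filter.2 ⟨ha, hax⟩⟩
    obtain ⟨m1, m2⟩ := Finset.mem_filter.1 hm
    refine ⟨m, Finset.mem_coe.2 (Finset.mem_filter.2 ⟨m1, by rw [m2]; exact hx, ?_⟩), m2⟩
    intro b hb hbm
    exact hmax b (Finset.mem_filter.2 ⟨hb, hbm.trans m2⟩)

lemma outer_face {P : Finset ℂ} (hP : Cfg P) (hne : P.Nonempty)
    (hdeg : ∀ x ∈ P, ∃ a ∈ D P, ∃ b ∈ D P, a.1 = x ∧ b.1 = x ∧ a ≠ b) :
    ∃ S ⊆ D P, ∃ nxt : ℂ × ℂ → ℂ × ℂ, (∀ a ∈ D P, nxt a ∈ D P) ∧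
      (∀ a ∈ D P, (nxt a).1 = a.1) ∧ (∀ a ∈ D P, ∀ b ∈ D P, nxt a = nxt b → a = b) ∧
      (∀ a ∈ D P, nxt a ≠ a) ∧ (∀ a ∈ S, (nxt a).swap ∈ S) ∧ S.Nonempty ∧
      ∀ V ⊆ P, (∀ a ∈ S, a.1 ∈ V) →
        2 * S.card + 6 + ((D P).filter fun a => a.1 ∈ V).card ≤ 6 * V.card := by
  obtain ⟨O, O1, O2, O3⟩ := exists_comp hP hne
  obtain ⟨nxt, n1, n2, n3, n4⟩ := exists_next (D P) Prod.fst kk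
    (fun a ha b hb h1 h2 => kk_inj ha hb h1 h2)
  have hpi := Real.pi_pos
  have hdeg1 : ∀ x ∈ P, ∃ a ∈ D P, a.1 = x := fun x hx => by
    obtain ⟨a, ha, b, hb, h1, _⟩ := hdeg x hx
    exact ⟨a, ha, h1⟩
  have hnn : ∀ a ∈ D P, nxt a ≠ a := by
    intro a ha he
    rcases n4 a ha with h | h
    · rw [he] at h; exact lt_irrefl _ h.1
    · rw [he] at h
      obtain ⟨b, hb, c, hc, h1, h2, h3⟩ := hdeg a.1 (mem_D.1 ha).1
      apply h3
      apply kk_inj hb hc (h1.trans h2.symm)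
      rw [le_antisymm (h.1 b hb h1) (h.2 b hb h1), le_antisymm (h.1 c hc h2) (h.2 c hc h2)]
  set wr : ℂ × ℂ → ℝ := fun a => if wrap P a then 1 else 0 with hwr
  set θ : ℂ × ℂ → ℝ := fun a => kk (nxt a) - kk a + 2 * Real.pi * wr a with hθ
  have θge : ∀ a ∈ D P, Real.pi / 3 ≤ θ a := by
    intro a ha
    rcases n4 a ha with h | h
    · have hw : ¬ wrap P a := fun hw => absurd (hw _ (n1 a ha) (n2 a ha)) (not_le.2 h.1)
      have := (kk_sep hP ha (n1 a ha) (n2 a ha).symm h.1).1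
      simp only [hθ, hwr, if_neg hw]; linarith
    · have hw : wrap P a := h.1
      have hle := h.1 _ (n1 a ha) (n2 a ha)
      have hlt : kk (nxt a) < kk a := lt_of_le_of_ne hle fun he =>
        hnn a ha (kk_inj (n1 a ha) ha (n2 a ha) he)
      have := (kk_sep hP (n1 a ha) ha (n2 a ha) hlt).2
      simp only [hθ, hwr, if_pos hw]; linarith
  set S := (D P).filter (LO P O) with hS
  have SD : S ⊆ D P := Finset.filter_subset _ _
  have hcor : ∀ a ∈ S, (nxt a).swap ∈ S := by
    intro a ha
    obtain ⟨h1, h2⟩ := Finset.mem_filter.1 ha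
    refine Finset.mem_filter.2 ⟨swap_mem_D (n1 a h1), ?_⟩
    exact (corner hP O2 h1 (n1 a h1) (n2 a h1) (n4 a h1)).1 h2
  have hW : (S.filter (wrap P)).card = (P.filter fun x => side P x 1 ∈ O).card := by
    rw [← wrap_card hdeg1 _ (Finset.filter_subset _ _)]
    congr 1
    ext a
    simp only [hS, Finset.mem_filter]
    constructor
    · rintro ⟨⟨h1, h2⟩, h3⟩
      exact ⟨h1, ⟨(mem_D.1 h1).1, (LO_max hP O2 h1 h3).1 h2⟩, h3⟩
    · rintro ⟨h1, ⟨_, h2⟩, h3⟩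
      exact ⟨⟨h1, (LO_max hP O2 h1 h3).2 h2⟩, h3⟩
  set U := S.filter fun a => a.1.im < a.2.im with hU
  have hUO : U.card + 1 ≤ O.card := by
    have : (insert none (U.image some)) ⊆ O := by
      intro z hz
      rcases Finset.mem_insert.1 hz with h | h
      · rw [h]; exact O1
      · obtain ⟨a, ha, rfl⟩ := Finset.mem_image.1 h
        obtain ⟨h1, h2⟩ := Finset.mem_filter.1 ha
        exact (LO_up h2).1 (Finset.mem_filter.1 h1).2
    have h := Finset.card_le_card this
    rw [Finset.card_insert_of_notMem (by simp), Finset.card_image_of_injective _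
      (Option.some_injective _)] at h
    exact h
  have hUW : U.card + 1 ≤ (S.filter (wrap P)).card := by
    rw [hW]; exact hUO.trans O3
  have wrsum : ∀ A : Finset (ℂ × ℂ), ∑ a ∈ A, wr a = (A.filter (wrap P)).card := by
    intro A
    simp only [hwr, Finset.sum_boole]
  have hsumS : ∑ a ∈ S, θ a = 2 * Real.pi * (S.filter (wrap P)).card +
      Real.pi * (S.card - 2 * U.card) := by
    simp only [hθ, Finset.sum_add_distrib, Finset.sum_sub_distrib, ← Finset.mul_sum, wrsum]
    have e1 : ∑ a ∈ S, kk (nxt a) = ∑ a ∈ S, kk a.swap := by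
      rw [← sum_perm S (fun a => (nxt a).swap) hcor (fun a ha b hb h =>
        n3 a (SD ha) b (SD hb) (Prod.swap_injective h)) (fun a => kk a.swap)]
      simp
    have e2 : ∑ a ∈ S, kk a.swap = ∑ a ∈ S, (kk a + Real.pi * (1 - 2 *
        (if a.1.im < a.2.im then (1:ℝ) else 0))) := by
      apply Finset.sum_congr rfl
      intro a ha
      rcases lt_or_gt_of_ne (D_ne hP (SD ha)) with h | h
      · rw [kk_swap_up h, if_pos h]; ring
      · rw [kk_swap_dn h, if_neg (not_lt.2 h.le)]; ring
    rw [e1, e2, Finset.sum_add_distrib, ← Finset.mul_sum, Finset.sum_sub_distrib,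
      ← Finset.mul_sum, Finset.sum_boole]
    simp [hU]
    ring
  have hsumS' : Real.pi * (S.card + 2) ≤ ∑ a ∈ S, θ a := by
    rw [hsumS]
    have : (U.card : ℝ) + 1 ≤ (S.filter (wrap P)).card := by exact_mod_cast hUW
    nlinarith
  refine ⟨S, SD, nxt, n1, n2, n3, hnn, hcor, ?_, ?_⟩
  · have : 0 < (S.filter (wrap P)).card := by omega
    obtain ⟨a, ha⟩ := Finset.card_pos.1 this
    exact ⟨a, (Finset.mem_filter.1 ha).1⟩
  · intro V hV hSV
    set A := (D P).filter fun a => a.1 ∈ V with hA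
    have AD : ∀ a ∈ A, a ∈ D P := fun a ha => (Finset.mem_filter.1 ha).1
    have hSA : S ⊆ A := fun a ha => Finset.mem_filter.2 ⟨SD ha, hSV a ha⟩
    have hAs : ∑ a ∈ A, θ a = 2 * Real.pi * V.card := by
      simp only [hθ, Finset.sum_add_distrib, Finset.sum_sub_distrib, ← Finset.mul_sum, wrsum]
      rw [sum_perm A nxt (fun a ha => ?_) (fun a ha b hb h => n3 a (AD a ha) b (AD b hb) h) kk,
        sub_self, zero_add, ← wrap_card hdeg1 V hV]
      · congr 3
        ext a; simp only [hA, Finset.mem_filter]; tauto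
      · obtain ⟨h1, h2⟩ := Finset.mem_filter.1 ha
        exact Finset.mem_filter.2 ⟨n1 a h1, by rw [n2 a h1]; exact h2⟩
    rw [← Finset.sum_sdiff hSA] at hAs
    have h3 : (A \ S).card • (Real.pi / 3) ≤ ∑ a ∈ A \ S, θ a :=
      Finset.card_nsmul_le_sum _ _ _ fun a ha => θge a (AD a (Finset.mem_sdiff.1 ha).1)
    have h4 : ((A \ S).card : ℝ) = A.card - S.card := by
      rw [Finset.card_sdiff_of_subset hSA, Nat.cast_sub (Finset.card_le_card hSA)]
    rw [nsmul_eq_mul, h4] at h3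
    have h5 : Real.pi * (2 * S.card + 6 + A.card) ≤ Real.pi * (6 * V.card) := by nlinarith
    have h6 := le_of_mul_le_mul_left h5 hpi
    exact_mod_cast h6

/-! ### Induction -/

lemma D_split (P B : Finset ℂ) : (D P).card ≤ (D (P \ B)).card +
    (((D P).filter fun a => a.1 ∈ B) ∪ ((D P).filter fun a => a.1 ∈ B).image Prod.swap).card := by
  refine le_trans (Finset.card_le_card ?_) (Finset.card_union_le _ _)
  intro a ha
  have h := mem_D.1 ha
  simp only [Finset.mem_union, Finset.mem_image, Finset.mem_filter, mem_D (P := P \ B),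
    Finset.mem_sdiff]
  by_cases h1 : a.1 ∈ B
  · right; left; exact ⟨ha, h1⟩
  · by_cases h2 : a.2 ∈ B
    · right; right; exact ⟨a.swap, ⟨swap_mem_D ha, h2⟩, Prod.swap_swap a⟩
    · left; exact ⟨⟨h.1, h1⟩, ⟨h.2.1, h2⟩, h.2.2⟩

lemma boundary {P : Finset ℂ} (hP : Cfg P) (hne : P.Nonempty)
    (hdeg : ∀ x ∈ P, ∃ a ∈ D P, ∃ b ∈ D P, a.1 = x ∧ b.1 = x ∧ a ≠ b) :
    ∃ B ⊆ P, B.Nonempty ∧ (D P).card + 2 * B.card + 6 ≤ 6 * P.card ∧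
      (D P).card + 12 ≤ (D (P \ B)).card + 6 * B.card := by
  obtain ⟨S, SD, nxt, n1, n2, n3, nn, hc, hSne, hV⟩ := outer_face hP hne hdeg
  set B := S.image Prod.fst with hB
  have hBP : B ⊆ P := by
    intro x hx
    obtain ⟨a, ha, rfl⟩ := Finset.mem_image.1 hx
    exact (mem_D.1 (SD ha)).1
  have hSB : ∀ a ∈ S, a.1 ∈ B := fun a ha => Finset.mem_image_of_mem _ ha
  have hBS : B.card ≤ S.card := Finset.card_image_le
  have v1 := hV P subset_rfl (fun a ha => hBP (hSB a ha))
  have v2 := hV B hBP hSB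
  have v0 : ((D P).filter fun a => a.1 ∈ P).card = (D P).card := by
    congr 1
    apply Finset.filter_true_of_mem
    intro a ha; exact (mem_D.1 ha).1
  refine ⟨B, hBP, hSne.image _, by omega, ?_⟩
  have hsp := D_split P B
  set A := (D P).filter fun a => a.1 ∈ B with hA
  have hu := Finset.card_union_add_card_inter A (A.image Prod.swap)
  rw [Finset.card_image_of_injective A Prod.swap_injective] at hu
  set T := S ∪ S.image Prod.swap with hT
  have hSB2 : ∀ a ∈ S, a.2 ∈ B := by
    intro a ha
    have := Finset.surjOn_of_injOn_of_card_le (s := S) (t := S) (fun a => (nxt a).swap) hc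
      (fun a ha b hb h => n3 a (SD ha) b (SD hb) (Prod.swap_injective h)) le_rfl
    obtain ⟨c, hc1, hc2⟩ := this ha
    have : a.2 = c.1 := by
      rw [← n2 c (SD hc1), ← hc2]; rfl
    rw [this]; exact hSB c hc1
  have SA : ∀ a ∈ S, a ∈ A ∧ a.swap ∈ A := fun a ha =>
    ⟨Finset.mem_filter.2 ⟨SD ha, hSB a ha⟩, Finset.mem_filter.2 ⟨swap_mem_D (SD ha), hSB2 a ha⟩⟩
  have hTA : T ⊆ A ∩ A.image Prod.swap := by
    intro a ha
    rw [Finset.mem_inter, Finset.mem_image]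
    rcases Finset.mem_union.1 ha with h | h
    · exact ⟨(SA a h).1, a.swap, (SA a h).2, Prod.swap_swap a⟩
    · obtain ⟨c, hc, rfl⟩ := Finset.mem_image.1 h
      exact ⟨(SA c hc).2, c, (SA c hc).1, rfl⟩
  have hT1 : ∀ a ∈ T, a.1 ∈ B := fun a ha =>
    (Finset.mem_filter.1 (Finset.mem_inter.1 (hTA ha)).1).2
  have hT2 : 2 * B.card ≤ T.card := by
    rw [Finset.card_eq_sum_card_fiberwise hT1, mul_comm, ← smul_eq_mul]
    apply Finset.card_nsmul_le_sum
    intro x hx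
    obtain ⟨a, ha, rfl⟩ := Finset.mem_image.1 hx
    rw [← Finset.card_pair (nn a (SD ha)).symm]
    apply Finset.card_le_card
    intro c hc'
    rw [Finset.mem_insert, Finset.mem_singleton] at hc'
    rw [Finset.mem_filter]
    rcases hc' with rfl | rfl
    · exact ⟨Finset.mem_union_left _ ha, rfl⟩
    · refine ⟨Finset.mem_union_right _ ?_, n2 a (SD ha)⟩
      exact Finset.mem_image.2 ⟨_, hc a ha, Prod.swap_swap _⟩
  have hT3 := Finset.card_le_card hTA
  omega

lemma Cfg.sub {P Q : Finset ℂ} (hP : Cfg P) (h : Q ⊆ P) : Cfg Q :=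
  ⟨fun x hx y hy => hP.pack x (h hx) y (h hy), fun x hx y hy => hP.inj x (h hx) y (h hy)⟩

lemma main_ineq : ∀ n : ℕ, ∀ P : Finset ℂ, Cfg P → P.card = n →
    0 ≤ (6 * n - (D P).card : ℤ) ∧ (48 * n - 12 : ℤ) ≤ (6 * n - (D P).card : ℤ) ^ 2 := by
  intro n
  induction n using Nat.strong_induction_on with
  | _ n ih =>
  intro P hP hn
  rcases P.eq_empty_or_nonempty with rfl | hne
  · have : D (∅ : Finset ℂ) = ∅ := by simp [D]
    rw [this]; simp at hn; subst hn; simp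
  have hn0 : 0 < n := hn ▸ Finset.card_pos.2 hne
  by_cases hdeg : ∀ x ∈ P, ∃ a ∈ D P, ∃ b ∈ D P, a.1 = x ∧ b.1 = x ∧ a ≠ b
  · obtain ⟨B, hBP, hBne, h1, h2⟩ := boundary hP hne hdeg
    have hB0 := Finset.card_pos.2 hBne
    have hBle := Finset.card_le_card hBP
    have hcard : (P \ B).card = n - B.card := by rw [Finset.card_sdiff_of_subset hBP, hn]
    obtain ⟨i1, i2⟩ := ih (n - B.card) (by omega) (P \ B) (hP.sub Finset.sdiff_subset) hcard
    rw [hn] at h1 hBle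
    rw [Nat.cast_sub hBle] at i1 i2
    zify at h1 h2
    set s : ℤ := 6 * n - (D P).card with hs
    set s' : ℤ := 6 * ((n:ℤ) - B.card) - (D (P \ B)).card with hs'
    have j1 : s' + 12 ≤ s := by linarith
    have j2 : 2 * (B.card : ℤ) + 6 ≤ s := by linarith
    refine ⟨by linarith, ?_⟩
    nlinarith [mul_self_le_mul_self i1 (by linarith : s' ≤ s - 12)]
  · push Not at hdeg
    obtain ⟨x, hx, hdx⟩ := hdeg
    have hsp := D_split P {x}
    set A := (D P).filter fun a => a.1 ∈ ({x} : Finset ℂ) with hA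
    have hA1 : A.card ≤ 1 := by
      rw [Finset.card_le_one]
      intro a ha b hb
      obtain ⟨a1, a2⟩ := Finset.mem_filter.1 ha
      obtain ⟨b1, b2⟩ := Finset.mem_filter.1 hb
      exact hdx a a1 b b1 (Finset.mem_singleton.1 a2) (Finset.mem_singleton.1 b2)
    have hu := Finset.card_union_le A (A.image Prod.swap)
    have hi : (A.image Prod.swap).card ≤ A.card := Finset.card_image_le
    have hcard : (P \ {x}).card = n - 1 := by
      rw [Finset.card_sdiff_of_subset (by simpa using hx), hn]; simp
    obtain ⟨i1, i2⟩ := ih (n - 1) (by omega) (P \ {x}) (hP.sub Finset.sdiff_subset) hcard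
    have h2 : (D P).card ≤ (D (P \ {x})).card + 2 := by omega
    rcases Nat.lt_or_ge n 2 with hlt | hge
    · have h1 : n = 1 := by omega
      subst h1
      obtain ⟨y, rfl⟩ := Finset.card_eq_one.1 hn
      have : D ({y} : Finset ℂ) = ∅ := by
        apply Finset.eq_empty_of_forall_notMem
        intro a ha
        have := mem_D.1 ha
        simp only [Finset.mem_singleton] at this
        rw [this.1, this.2.1, dist_self] at this
        norm_num at this
      rw [this]; simp
    · rw [Nat.cast_sub (by omega)] at i1 i2
      push_cast at i1 i2
      zify at h2 hge
      set s : ℤ := 6 * n - (D P).card with hs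
      set s' : ℤ := 6 * ((n:ℤ) - 1) - (D (P \ {x})).card with hs'
      have j1 : s' + 4 ≤ s := by linarith
      have j2 : 4 ≤ s' := by nlinarith
      refine ⟨by linarith, ?_⟩
      nlinarith

lemma D_card {P : Finset ℂ} (hP : Cfg P) : (D P).card = 2 * (E P).card := by
  have h := Finset.card_filter_add_card_filter_not (s := D P) (fun p => p.1.im < p.2.im)
  have h2 : ((D P).filter fun p => ¬ p.1.im < p.2.im).card = (E P).card := by
    apply Finset.card_nbij Prod.swap
    · intro a ha
      obtain ⟨h1, h2⟩ := Finset.mem_filter.1 ha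
      exact dn_E h1 (lt_of_le_of_ne (not_lt.1 h2) (D_ne hP h1).symm)
    · exact Prod.swap_injective.injOn
    · intro a ha
      have ha' : a ∈ E P := ha
      refine ⟨a.swap, ?_, Prod.swap_swap a⟩
      refine Finset.mem_coe.2 (Finset.mem_filter.2 ⟨swap_mem_D (E_D ha'), ?_⟩)
      exact not_lt.2 (E_up ha').le
  have h3 : ((D P).filter fun p => p.1.im < p.2.im).card = (E P).card := rfl
  omega

/-- the linear map used to transfer to `ℂ` -/
def tr (r : ℝ) (x : EuclideanSpace ℝ (Fin 2)) : ℂ :=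
  ⟨(x 0 - r * x 1) / √(1 + r ^ 2), (x 1 + r * x 0) / √(1 + r ^ 2)⟩

lemma tr_dist (r : ℝ) (x y : EuclideanSpace ℝ (Fin 2)) : dist (tr r x) (tr r y) = dist x y := by
  rw [EuclideanSpace.dist_eq, Complex.dist_eq_re_im]
  congr 1
  have h : √(1 + r ^ 2) ≠ 0 := by positivity
  have h2 : √(1 + r ^ 2) ^ 2 = 1 + r ^ 2 := Real.sq_sqrt (by positivity)
  simp only [tr, Fin.sum_univ_two, Real.dist_eq, sq_abs]
  rw [← sub_div, ← sub_div, div_pow, div_pow, h2]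
  field_simp
  ring

lemma tr_inj (r : ℝ) : Function.Injective (tr r) := by
  intro x y h
  rw [← dist_eq_zero, ← tr_dist r, h, dist_self]

lemma exists_r (P : Finset (EuclideanSpace ℝ (Fin 2))) :
    ∃ r : ℝ, ∀ x ∈ P, ∀ y ∈ P, (tr r x).im = (tr r y).im → x = y := by
  obtain ⟨r, hr⟩ := Infinite.exists_notMem_finset
    ((P ×ˢ P).image fun p => (p.2 1 - p.1 1) / (p.1 0 - p.2 0))
  refine ⟨r, fun x hx y hy h => ?_⟩
  have hs : √(1 + r ^ 2) ≠ 0 := by positivity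
  simp only [tr] at h
  rw [div_left_inj' hs] at h
  by_cases h0 : x 0 = y 0
  · rw [h0] at h
    ext i
    fin_cases i
    · exact h0
    · simpa using h
  · exfalso
    apply hr
    refine Finset.mem_image.2 ⟨(x, y), Finset.mem_product.2 ⟨hx, hy⟩, ?_⟩
    have : x 0 - y 0 ≠ 0 := sub_ne_zero.2 h0
    simp only
    field_simp
    linarith

lemma tr_contacts (r : ℝ) (P : Finset (EuclideanSpace ℝ (Fin 2))) :
    contactsOrdered P = (D (P.image (tr r))).card := by
  unfold contactsOrdered
  apply Finset.card_nbij (Prod.map (tr r) (tr r))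
  · intro a ha
    obtain ⟨h1, h2⟩ := Finset.mem_filter.1 ha
    rw [Finset.mem_offDiag] at h1
    exact mem_D.2 ⟨Finset.mem_image_of_mem _ h1.1, Finset.mem_image_of_mem _ h1.2.1,
      (tr_dist r _ _).trans h2⟩
  · exact (Function.Injective.prodMap (tr_inj r) (tr_inj r)).injOn
  · rintro ⟨u, v⟩ hb
    obtain ⟨h1, h2, h3⟩ := mem_D.1 (Finset.mem_coe.1 hb)
    simp only at h1 h2 h3
    obtain ⟨x, hx, rfl⟩ := Finset.mem_image.1 h1
    obtain ⟨y, hy, rfl⟩ := Finset.mem_image.1 h2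
    rw [tr_dist] at h3
    refine ⟨(x, y), Finset.mem_coe.2 (Finset.mem_filter.2 ⟨Finset.mem_offDiag.2 ⟨hx, hy, ?_⟩, h3⟩),
      rfl⟩
    simp only
    rintro rfl
    rw [dist_self] at h3; norm_num at h3

end Harb

/-- Harborth's theorem (upper bound): any packing of `n ≥ 2` unit disks in the plane
has at most `⌊3n - √(12n - 3)⌋` touching pairs. -/
theorem contact_upper_bound_plane (n : ℕ) (hn : 2 ≤ n)
    (P : Finset (EuclideanSpace ℝ (Fin 2))) (hcard : P.card = n)
    (hpack : ∀ x ∈ P, ∀ y ∈ P, x ≠ y → 2 ≤ dist x y) :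
    (contactsOrdered P : ℤ) ≤ 2 * ⌊(3 * n - Real.sqrt (12 * n - 3) : ℝ)⌋ := by
  obtain ⟨r, hr⟩ := Harb.exists_r P
  have hC : Harb.Cfg (P.image (Harb.tr r)) := by
    constructor
    · intro u hu v hv huv
      obtain ⟨x, hx, rfl⟩ := Finset.mem_image.1 hu
      obtain ⟨y, hy, rfl⟩ := Finset.mem_image.1 hv
      rw [Harb.tr_dist]
      exact hpack x hx y hy fun h => huv (by rw [h])
    · intro u hu v hv huv
      obtain ⟨x, hx, rfl⟩ := Finset.mem_image.1 hu
      obtain ⟨y, hy, rfl⟩ := Finset.mem_image.1 hv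
      rw [hr x hx y hy huv]
  obtain ⟨m1, m2⟩ := Harb.main_ineq n _ hC
    (by rw [Finset.card_image_of_injective _ (Harb.tr_inj r), hcard])
  rw [Harb.tr_contacts r, Harb.D_card hC]
  rw [Harb.D_card hC] at m1 m2
  set k := (Harb.E (P.image (Harb.tr r))).card
  push_cast at m1 m2 ⊢
  have : (k : ℤ) ≤ ⌊(3 * n - Real.sqrt (12 * n - 3) : ℝ)⌋ := by
    rw [Int.le_floor]
    have a1 : (0:ℝ) ≤ 3 * n - k := by
      have : (0:ℝ) ≤ 6 * n - 2 * k := by exact_mod_cast m1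
      linarith
    have a2 : (12 * n - 3 : ℝ) ≤ (3 * n - k) ^ 2 := by
      have : (48 * n - 12 : ℝ) ≤ (6 * n - 2 * k) ^ 2 := by exact_mod_cast m2
      linarith
    have := Real.sqrt_le_iff.2 ⟨a1, a2⟩
    push_cast
    linarith
  linarith
end
end

section
/- For every n ≥ 2 there exists a packing of n non-overlapping unit disks in the Euclidean plane whose contact number equals ⌊3n − √(12n − 3)⌋. -/
open scoped Classical

noncomputable section

/-- Adjacency in the triangular lattice (coordinates in a lattice basis). -/
def TAdj (p q : ℤ × ℤ) : Prop :=
  (p.1 - q.1) ^ 2 + (p.1 - q.1) * (p.2 - q.2) + (p.2 - q.2) ^ 2 = 1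

/-- Number of ordered adjacent pairs. -/
def TCount (S : Finset (ℤ × ℤ)) : ℤ := ∑ p ∈ S, ∑ q ∈ S, if TAdj p q then 1 else 0

lemma TAdj_comm (p q : ℤ × ℤ) : TAdj p q ↔ TAdj q p := by
  unfold TAdj
  constructor <;> intro h <;> linarith

lemma TAdj_irrefl (p : ℤ × ℤ) : ¬ TAdj p p := by
  simp [TAdj]

lemma six (x y : ℤ) : x ^ 2 + x * y + y ^ 2 = 1 ↔
    (x = 1 ∧ y = 0) ∨ (x = -1 ∧ y = 0) ∨ (x = 0 ∧ y = 1) ∨ (x = 0 ∧ y = -1) ∨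
    (x = 1 ∧ y = -1) ∨ (x = -1 ∧ y = 1) := by
  constructor
  · intro h
    have h1 : x ≤ 1 := by nlinarith [sq_nonneg (x + 2 * y)]
    have h2 : -1 ≤ x := by nlinarith [sq_nonneg (x + 2 * y)]
    have h3 : y ≤ 1 := by nlinarith [sq_nonneg (y + 2 * x)]
    have h4 : -1 ≤ y := by nlinarith [sq_nonneg (y + 2 * x)]
    interval_cases x <;> interval_cases y <;> simp_all
  · rintro (⟨rfl, rfl⟩ | ⟨rfl, rfl⟩ | ⟨rfl, rfl⟩ | ⟨rfl, rfl⟩ | ⟨rfl, rfl⟩ | ⟨rfl, rfl⟩) <;> norm_num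

lemma TAdj_ite (x y : ℤ) (q : ℤ × ℤ) : (if TAdj (x, y) q then (1 : ℤ) else 0) =
    (if q = (x - 1, y) then 1 else 0) + (if q = (x + 1, y) then 1 else 0) +
    (if q = (x, y - 1) then 1 else 0) + (if q = (x, y + 1) then 1 else 0) +
    (if q = (x - 1, y + 1) then 1 else 0) + (if q = (x + 1, y - 1) then 1 else 0) := by
  obtain ⟨a, b⟩ := q
  simp only [TAdj, six, Prod.mk.injEq]
  split_ifs <;> omega

lemma TCount_insert (S : Finset (ℤ × ℤ)) (x y : ℤ) (hz : (x, y) ∉ S) :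
    TCount (insert (x, y) S) = TCount S + 2 * (
    (if (x - 1, y) ∈ S then 1 else 0) + (if (x + 1, y) ∈ S then 1 else 0) +
    (if (x, y - 1) ∈ S then 1 else 0) + (if (x, y + 1) ∈ S then 1 else 0) +
    (if (x - 1, y + 1) ∈ S then 1 else 0) + (if (x + 1, y - 1) ∈ S then 1 else 0)) := by
  have hdeg : ∑ q ∈ S, (if TAdj (x, y) q then (1 : ℤ) else 0) =
    (if (x - 1, y) ∈ S then 1 else 0) + (if (x + 1, y) ∈ S then 1 else 0) +
    (if (x, y - 1) ∈ S then 1 else 0) + (if (x, y + 1) ∈ S then 1 else 0) +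
    (if (x - 1, y + 1) ∈ S then 1 else 0) + (if (x + 1, y - 1) ∈ S then 1 else 0) := by
    simp only [TAdj_ite, Finset.sum_add_distrib, Finset.sum_ite_eq']
  rw [← hdeg]
  unfold TCount
  rw [Finset.sum_insert hz, Finset.sum_insert hz, if_neg (TAdj_irrefl _)]
  simp only [Finset.sum_insert hz, Finset.sum_add_distrib]
  have : ∀ p, (if TAdj p (x, y) then (1 : ℤ) else 0) = if TAdj (x, y) p then 1 else 0 := by
    intro p
    simp only [TAdj_comm p]
  simp only [this]
  ring

/-- A lattice set with `n` points and `e` contacts whose top two rows are known. -/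
def Stk (n e L s j : ℤ) : Prop :=
  ∃ (S : Finset (ℤ × ℤ)) (b l : ℤ), (S.card : ℤ) = n ∧ TCount S = 2 * e ∧
    (∀ x, (x, b) ∈ S ↔ l ≤ x ∧ x < l + L) ∧
    (∀ x, (x, b + 1) ∈ S ↔ l + s ≤ x ∧ x < l + s + j) ∧
    (∀ x y, b + 1 < y → (x, y) ∉ S)

lemma Stk_zero : Stk 0 0 0 0 0 := by
  refine ⟨∅, 0, 0, ?_, ?_, ?_, ?_, ?_⟩ <;> simp [TCount]

lemma Stk_finish {n e L s j : ℤ} (s' : ℤ) (h : Stk n e L s j) : Stk n e j s' 0 := by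
  obtain ⟨S, b, l, h1, h2, h3, h4, h5⟩ := h
  refine ⟨S, b + 1, l + s, h1, h2, h4, ?_, ?_⟩
  · intro x
    have := h5 x (b + 1 + 1) (by omega)
    simp only [this, false_iff]
    omega
  · intro x y hy
    exact h5 x y (by omega)

lemma Stk_step {n e L s j : ℤ} (hj : 0 ≤ j) (h : Stk n e L s j) :
    Stk (n + 1) (e + ((if 0 < j then 1 else 0) + (if 0 ≤ s + j ∧ s + j < L then 1 else 0) +
      (if 0 ≤ s + j + 1 ∧ s + j + 1 < L then 1 else 0))) L s (j + 1) := by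
  obtain ⟨S, b, l, h1, h2, h3, h4, h5⟩ := h
  have hz : (l + s + j, b + 1) ∉ S := by rw [h4]; omega
  refine ⟨insert (l + s + j, b + 1) S, b, l, ?_, ?_, ?_, ?_, ?_⟩
  · rw [Finset.card_insert_of_notMem hz]; push_cast; omega
  · rw [TCount_insert S _ _ hz, h2]
    have e1 : b + 1 - 1 = b := by ring
    have n1 := h5 (l + s + j) (b + 1 + 1) (by omega)
    have n2 := h5 (l + s + j - 1) (b + 1 + 1) (by omega)
    rw [if_neg n1, if_neg n2]
    simp only [e1, h3, h4]
    split_ifs <;> omega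
  · intro x
    rw [Finset.mem_insert, h3, Prod.mk.injEq]
    omega
  · intro x
    rw [Finset.mem_insert, h4, Prod.mk.injEq]
    omega
  · intro x y hy
    rw [Finset.mem_insert, Prod.mk.injEq]
    have := h5 x y hy
    rintro (h | h)
    · omega
    · exact this h

/-- A stack of complete rows, with top row of length `L`, `n` points and `3n - t` contacts. -/
def Full (t n L : ℤ) : Prop := ∀ s, Stk n (3 * n - t) L s 0

lemma Stk_congr {n e L s j n' e' j' : ℤ} (h : Stk n e L s j) (hn : n = n') (he : e = e')
    (hj : j = j') : Stk n' e' L s j' := by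
  subst hn he hj; exact h

lemma full_first (c : ℕ) : Full (2 * (c + 1) + 1) (c + 1) (c + 1) := by
  have : Stk (c + 1) c 0 0 (c + 1) := by
    induction c with
    | zero => 
      refine Stk_congr (Stk_step le_rfl Stk_zero) ?_ ?_ ?_ <;> simp
    | succ c ih =>
      refine Stk_congr (Stk_step (by omega) ih) ?_ ?_ ?_
      · push_cast; ring
      · push_cast; split_ifs <;> omega
      · push_cast; ring
  intro s
  exact Stk_congr (Stk_finish s this) rfl (by ring) rfl

lemma row_zero {t n L : ℤ} (h : Full t n L) (r : ℕ) (hr : (r : ℤ) + 1 < L) :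
    Stk (n + (r + 1)) (3 * n - t + 3 * r + 2) L 0 (r + 1) := by
  induction r with
  | zero =>
    refine Stk_congr (Stk_step le_rfl (h 0)) ?_ ?_ ?_
    · simp
    · simp only [Nat.cast_zero] at *
      rw [if_neg (by omega), if_pos (by omega), if_pos (by omega)]
      ring
    · simp
  | succ r ih =>
    refine Stk_congr (Stk_step (by omega) (ih (by push_cast at hr; omega))) ?_ ?_ ?_
    · push_cast; ring
    · push_cast at *; split_ifs <;> omega
    · push_cast; ring

lemma full_part {t n L : ℤ} (h : Full t n L) (r : ℤ) (h1 : 1 ≤ r) (hr : r < L) :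
    Full (t + 1) (n + r) r := by
  intro s
  obtain ⟨m, rfl⟩ : ∃ m : ℕ, r = m + 1 := ⟨(r - 1).toNat, by omega⟩
  exact Stk_congr (Stk_finish s (row_zero h m hr)) rfl (by ring) rfl

lemma full_equal {t n L : ℤ} (h : Full t n L) (hL : 2 ≤ L) : Full (t + 2) (n + L) L := by
  intro s
  obtain ⟨m, rfl⟩ : ∃ m : ℕ, L = m + 2 := ⟨(L - 2).toNat, by omega⟩
  refine Stk_congr (Stk_finish (j := m + 2) s (Stk_congr (Stk_step (by omega)
    (row_zero h m (by omega))) rfl rfl (by ring))) (by ring) ?_ rfl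
  split_ifs <;> omega

lemma full_grow {t n L : ℤ} (h : Full t n L) (hL : 1 ≤ L) : Full (t + 3) (n + L + 1) (L + 1) := by
  have key : ∀ r : ℕ, (r : ℤ) < L → Stk (n + (r + 1)) (3 * n - t + 3 * r + 1) L (-1) (r + 1) := by
    intro r hr
    induction r with
    | zero =>
      refine Stk_congr (Stk_step le_rfl (h (-1))) ?_ ?_ ?_
      · simp
      · simp only [Nat.cast_zero] at *
        rw [if_neg (by omega), if_neg (by omega), if_pos (by omega)]
        ring
      · simp
    | succ r ih =>
      refine Stk_congr (Stk_step (by omega) (ih (by push_cast at hr; omega))) ?_ ?_ ?_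
      · push_cast; ring
      · push_cast at *; split_ifs <;> omega
      · push_cast; ring
  intro s
  obtain ⟨m, rfl⟩ : ∃ m : ℕ, L = m + 1 := ⟨(L - 1).toNat, by omega⟩
  refine Stk_congr (Stk_finish (j := m + 1 + 1) s (Stk_congr (Stk_step (by omega)
    (key m (by omega))) rfl rfl (by ring))) (by ring) ?_ rfl
  split_ifs <;> omega

lemma full_grows (c p : ℕ) (hc : 1 ≤ c) :
    ∃ n : ℤ, 2 * n = (p + 1) * (2 * c + p) ∧ Full (2 * c + 1 + 3 * p) n (c + p) := by
  induction p with
  | zero =>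
    obtain ⟨m, rfl⟩ : ∃ m : ℕ, c = m + 1 := ⟨c - 1, by omega⟩
    refine ⟨m + 1, by push_cast; ring, ?_⟩
    have := full_first m
    push_cast
    simpa using this
  | succ p ih =>
    obtain ⟨n, h1, h2⟩ := ih
    refine ⟨n + (c + p) + 1, by push_cast; linarith, ?_⟩
    have := full_grow h2 (by omega)
    convert this using 1 <;> push_cast <;> ring

lemma full_shrinks {t n L : ℤ} (h : Full t n L) (q : ℕ) (hq : (q : ℤ) < L) :
    ∃ n' : ℤ, 2 * n' = 2 * n + 2 * q * L - q * (q + 1) ∧ Full (t + q) n' (L - q) := by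
  induction q with
  | zero => exact ⟨n, by simp, by simpa using h⟩
  | succ q ih =>
    push_cast at hq
    obtain ⟨n', h1, h2⟩ := ih (by omega)
    refine ⟨n' + (L - q - 1), by push_cast; linarith, ?_⟩
    have := full_part h2 (L - q - 1) (by omega) (by omega)
    convert this using 1 <;> push_cast <;> ring

/-- Hexagons without doubled middle row, plus a partial row of length `r`. -/
lemma hex0 (c p q : ℕ) (hc : 1 ≤ c) (t n r : ℤ) (hr1 : 1 ≤ r) (hr : r < c + p - q)
    (ht : t = 2 * c + 1 + 3 * p + q + 1)
    (hn : 2 * n = (p + 1) * (2 * c + p) + 2 * q * (c + p) - q * (q + 1) + 2 * r) :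
    ∃ L, Full t n L := by
  obtain ⟨n1, h1, f1⟩ := full_grows c p hc
  obtain ⟨n2, h2, f2⟩ := full_shrinks f1 q (by omega)
  have f3 := full_part f2 r hr1 hr
  have : n = n2 + r := by linarith
  subst this ht
  exact ⟨_, f3⟩

/-- Hexagons with doubled middle row, plus a partial row of length `r`. -/
lemma hex1 (c p q : ℕ) (hc : 1 ≤ c) (t n r : ℤ) (hr1 : 1 ≤ r) (hr : r < c + p - q)
    (ht : t = 2 * c + 1 + 3 * p + 2 + q + 1)
    (hn : 2 * n = (p + 1) * (2 * c + p) + 2 * (c + p) + 2 * q * (c + p) - q * (q + 1) + 2 * r) :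
    ∃ L, Full t n L := by
  obtain ⟨n1, h1, f1⟩ := full_grows c p hc
  obtain ⟨n2, h2, f2⟩ := full_shrinks (full_equal f1 (by omega)) q (by omega)
  have f3 := full_part f2 r hr1 hr
  have : n = n2 + r := by linarith
  subst this ht
  exact ⟨_, f3⟩

/-- Embedding of the lattice into the plane. -/
def emb (p : ℤ × ℤ) : EuclideanSpace ℝ (Fin 2) := !₂[2 * (p.1 : ℝ) + p.2, Real.sqrt 3 * p.2]

lemma emb_dist_sq (p q : ℤ × ℤ) : dist (emb p) (emb q) ^ 2 =
    4 * (((p.1 - q.1) ^ 2 + (p.1 - q.1) * (p.2 - q.2) + (p.2 - q.2) ^ 2 : ℤ) : ℝ) := by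
  rw [EuclideanSpace.dist_eq, Real.sq_sqrt (Finset.sum_nonneg fun _ _ => sq_nonneg _)]
  simp only [Fin.sum_univ_two, emb, Real.dist_eq, sq_abs]
  have h3 : Real.sqrt 3 ^ 2 = 3 := Real.sq_sqrt (by norm_num)
  simp
  linear_combination ((p.2 : ℝ) - q.2) ^ 2 * h3

lemma emb_dist_eq (p q : ℤ × ℤ) : dist (emb p) (emb q) = 2 ↔ TAdj p q := by
  have h := emb_dist_sq p q
  unfold TAdj
  constructor
  · intro h2
    rw [h2] at h
    have : (((p.1 - q.1) ^ 2 + (p.1 - q.1) * (p.2 - q.2) + (p.2 - q.2) ^ 2 : ℤ) : ℝ) = 1 := by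
      linarith
    exact_mod_cast this
  · intro h2
    rw [h2] at h
    have h0 : 0 ≤ dist (emb p) (emb q) := dist_nonneg
    push_cast at h
    nlinarith

lemma emb_sep (p q : ℤ × ℤ) (hpq : p ≠ q) : 2 ≤ dist (emb p) (emb q) := by
  have h := emb_dist_sq p q
  have h0 : 0 ≤ dist (emb p) (emb q) := dist_nonneg
  have h1 : 1 ≤ (p.1 - q.1) ^ 2 + (p.1 - q.1) * (p.2 - q.2) + (p.2 - q.2) ^ 2 := by
    by_contra hc
    have h2 : p.2 - q.2 = 0 := by
      have : (p.2 - q.2) ^ 2 < 1 ∨ 1 ≤ (p.2 - q.2) ^ 2 := lt_or_ge _ _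
      have h5 : (p.2 - q.2) ^ 2 = 0 := by
        nlinarith [sq_nonneg (2 * (p.1 - q.1) + (p.2 - q.2)), sq_nonneg (p.2 - q.2)]
      exact pow_eq_zero_iff (two_ne_zero) |>.1 h5
    rw [h2] at hc
    have h3 : p.1 - q.1 = 0 := by
      have h5 : (p.1 - q.1) ^ 2 = 0 := by nlinarith [sq_nonneg (p.1 - q.1)]
      exact pow_eq_zero_iff (two_ne_zero) |>.1 h5
    exact hpq (Prod.ext (by omega) (by omega))
  have h2 : (1 : ℝ) ≤ (((p.1 - q.1) ^ 2 + (p.1 - q.1) * (p.2 - q.2) + (p.2 - q.2) ^ 2 : ℤ) : ℝ) := by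
    exact_mod_cast h1
  nlinarith

lemma emb_inj : Function.Injective emb := by
  intro p q h
  by_contra hne
  have := emb_sep p q hne
  rw [h, dist_self] at this
  norm_num at this

lemma contacts_emb (S : Finset (ℤ × ℤ)) :
    (contactsOrdered (S.map ⟨emb, emb_inj⟩) : ℤ) = TCount S := by
  have : ((S.map ⟨emb, emb_inj⟩).offDiag.filter fun p => dist p.1 p.2 = 2) =
      ((S ×ˢ S).filter fun p => TAdj p.1 p.2).map
        (Function.Embedding.prodMap ⟨emb, emb_inj⟩ ⟨emb, emb_inj⟩) := by
    ext ⟨u, v⟩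
    simp only [Finset.mem_filter, Finset.mem_offDiag, Finset.mem_map, Finset.mem_product,
      Function.Embedding.coeFn_mk, Function.Embedding.coe_prodMap, Prod.exists, Prod.map_apply,
      Prod.mk.injEq]
    constructor
    · rintro ⟨⟨⟨a, b, ha, rfl⟩, ⟨c, d, hc, rfl⟩, -⟩, hd⟩
      exact ⟨_, _, _, _, ⟨⟨ha, hc⟩, (emb_dist_eq _ _).1 hd⟩, rfl, rfl⟩
    · rintro ⟨a, b, c, d, ⟨⟨ha, hc⟩, hd⟩, rfl, rfl⟩
      have hd' := (emb_dist_eq _ _).2 hd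
      refine ⟨⟨⟨_, _, ha, rfl⟩, ⟨_, _, hc, rfl⟩, ?_⟩, hd'⟩
      intro he
      rw [he, dist_self] at hd'
      norm_num at hd'
  unfold contactsOrdered
  rw [this, Finset.card_map, Finset.card_filter, Finset.sum_product]
  unfold TCount
  push_cast
  rfl


lemma exists_full_small (n m : ℤ) (hn : 2 ≤ n) (hm : 5 ≤ m) (hm9 : m ≤ 9)
    (hlo : (m - 1) ^ 2 < 12 * n - 3) (hhi : 12 * n - 3 ≤ m ^ 2) : ∃ L, Full m n L := by
  have f2 := full_first 1
  have f3 := full_first 2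
  norm_num at f2 f3
  have hn7 : n ≤ 7 := by nlinarith
  interval_cases m <;> interval_cases n <;> first
    | omega
    | exact ⟨_, f2⟩
    | exact ⟨_, full_part f2 1 (by norm_num) (by norm_num)⟩
    | exact ⟨_, full_equal f2 (by norm_num)⟩
    | exact ⟨_, full_grow f2 (by norm_num)⟩
    | exact ⟨_, full_part (full_part f3 2 (by norm_num) (by norm_num)) 1 (by norm_num) (by norm_num)⟩
    | exact ⟨_, full_part (full_grow f2 (by norm_num)) 2 (by norm_num) (by norm_num)⟩

lemma exists_full (n m : ℤ) (hn : 2 ≤ n) (hm : 5 ≤ m) (hlo : (m - 1) ^ 2 < 12 * n - 3)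
    (hhi : 12 * n - 3 ≤ m ^ 2) : ∃ L, Full m n L := by
  by_cases hm9 : m ≤ 9
  · exact exists_full_small n m hn hm hm9 hlo hhi
  obtain ⟨j, hj⟩ : ∃ j : ℕ, (j : ℤ) = (m - 10) / 6 := ⟨((m - 10) / 6).toNat, by omega⟩
  have hcases : m = 6 * j + 10 ∨ m = 6 * j + 11 ∨ m = 6 * j + 12 ∨ m = 6 * j + 13 ∨
      m = 6 * j + 14 ∨ m = 6 * j + 15 := by omega
  have hj0 : (0 : ℤ) ≤ j := by omega
  clear hj
  rcases hcases with rfl | rfl | rfl | rfl | rfl | rfl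
  · obtain ⟨r, hr⟩ : ∃ r : ℤ, r = n - (3 * (j + 1) ^ 2 + 3 * (j + 1) + 1) := ⟨_, rfl⟩
    have r0 : 0 < 12 * r := by rw [hr]; linarith
    have r1 : 12 * r ≤ 12 * ((j + 1)) + 11 := by rw [hr]; linarith
    refine hex0 (j + 2) (j + 1) (j + 1) (by omega) _ n r (by omega) ?_ ?_ ?_
    · push_cast; omega
    · push_cast; ring
    · rw [hr]; push_cast; ring
  · obtain ⟨r, hr⟩ : ∃ r : ℤ, r = n - (3 * (j + 1) ^ 2 + 4 * (j + 1) + 1) := ⟨_, rfl⟩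
    have r0 : 0 < 12 * r := by rw [hr]; linarith
    have r1 : 12 * r ≤ 12 * ((j + 1) + 1) + 11 := by rw [hr]; linarith
    refine hex1 (j + 2) (j + 1) j (by omega) _ n r (by omega) ?_ ?_ ?_
    · push_cast; omega
    · push_cast; ring
    · rw [hr]; push_cast; ring
  · obtain ⟨r, hr⟩ : ∃ r : ℤ, r = n - (3 * (j + 1) ^ 2 + 5 * (j + 1) + 2) := ⟨_, rfl⟩
    have r0 : 0 < 12 * r := by rw [hr]; linarith
    have r1 : 12 * r ≤ 12 * ((j + 1) + 1) + 11 := by rw [hr]; linarith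
    refine hex0 (j + 3) (j + 1) (j + 1) (by omega) _ n r (by omega) ?_ ?_ ?_
    · push_cast; omega
    · push_cast; ring
    · rw [hr]; push_cast; ring
  · obtain ⟨r, hr⟩ : ∃ r : ℤ, r = n - (3 * (j + 1) ^ 2 + 6 * (j + 1) + 3) := ⟨_, rfl⟩
    have r0 : 0 < 12 * r := by rw [hr]; linarith
    have r1 : 12 * r ≤ 12 * ((j + 1) + 1) + 11 := by rw [hr]; linarith
    refine hex0 (j + 2) (j + 2) (j + 1) (by omega) _ n r (by omega) ?_ ?_ ?_
    · push_cast; omega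
    · push_cast; ring
    · rw [hr]; push_cast; ring
  · obtain ⟨r, hr⟩ : ∃ r : ℤ, r = n - (3 * (j + 1) ^ 2 + 7 * (j + 1) + 4) := ⟨_, rfl⟩
    have r0 : 0 < 12 * r := by rw [hr]; linarith
    have r1 : 12 * r ≤ 12 * ((j + 1) + 1) + 11 := by rw [hr]; linarith
    refine hex1 (j + 3) (j + 1) (j + 1) (by omega) _ n r (by omega) ?_ ?_ ?_
    · push_cast; omega
    · push_cast; ring
    · rw [hr]; push_cast; ring
  · obtain ⟨r, hr⟩ : ∃ r : ℤ, r = n - (3 * (j + 1) ^ 2 + 8 * (j + 1) + 5) := ⟨_, rfl⟩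
    have r0 : 0 < 12 * r := by rw [hr]; linarith
    have r1 : 12 * r ≤ 12 * ((j + 1) + 2) + 11 := by rw [hr]; linarith
    refine hex0 (j + 3) (j + 2) (j + 1) (by omega) _ n r (by omega) ?_ ?_ ?_
    · push_cast; omega
    · push_cast; ring
    · rw [hr]; push_cast; ring

/-- Harborth's theorem (sharpness): for every `n ≥ 2` there is a packing of `n` unit
disks in the plane with exactly `⌊3n - √(12n - 3)⌋` touching pairs. -/
theorem contact_bound_plane_attained (n : ℕ) (hn : 2 ≤ n) :
    ∃ P : Finset (EuclideanSpace ℝ (Fin 2)), P.card = n ∧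
      (∀ x ∈ P, ∀ y ∈ P, x ≠ y → 2 ≤ dist x y) ∧
      (contactsOrdered P : ℤ) = 2 * ⌊(3 * n - Real.sqrt (12 * n - 3) : ℝ)⌋ := by
  have hn' : (2 : ℝ) ≤ n := by exact_mod_cast hn
  obtain ⟨m, hm⟩ : ∃ m : ℤ, m = ⌈Real.sqrt (12 * n - 3)⌉ := ⟨_, rfl⟩
  have hsq : Real.sqrt (12 * n - 3) ^ 2 = 12 * n - 3 := Real.sq_sqrt (by linarith)
  have hs0 : 0 ≤ Real.sqrt (12 * n - 3) := Real.sqrt_nonneg _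
  obtain ⟨hm1, hm2⟩ := Int.ceil_eq_iff.1 hm.symm
  have hs1 : 4 < Real.sqrt (12 * n - 3) := by nlinarith
  have hm5 : 5 ≤ m := by
    have : (4 : ℝ) < m := by linarith
    have : (4 : ℤ) < m := by exact_mod_cast this
    omega
  have hmr : (5 : ℝ) ≤ m := by exact_mod_cast hm5
  have hlo : (m - 1) ^ 2 < 12 * (n : ℤ) - 3 := by
    have : ((m : ℝ) - 1) ^ 2 < 12 * n - 3 := by nlinarith
    exact_mod_cast this
  have hhi : 12 * (n : ℤ) - 3 ≤ m ^ 2 := by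
    have : 12 * (n : ℝ) - 3 ≤ (m : ℝ) ^ 2 := by nlinarith
    exact_mod_cast this
  obtain ⟨L, hL⟩ := exists_full n m (by exact_mod_cast hn) hm5 hlo hhi
  obtain ⟨S, b, l, h1, h2, -⟩ := hL 0
  refine ⟨S.map ⟨emb, emb_inj⟩, ?_, ?_, ?_⟩
  · rw [Finset.card_map]; exact_mod_cast h1
  · intro x hx y hy hxy
    obtain ⟨p, -, rfl⟩ := Finset.mem_map.1 hx
    obtain ⟨q, -, rfl⟩ := Finset.mem_map.1 hy
    exact emb_sep p q (fun h => hxy (by rw [h]))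
  · rw [contacts_emb, h2]
    congr 1
    symm
    rw [Int.floor_eq_iff]
    push_cast
    constructor <;> linarith
end
end
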